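/- There are exactly 3228 conjugacy classes of finite-index subgroups Γ̄ of PSL(2,ℤ) that have genus zero and satisfy n + 3·e₂(Γ̄) + 2·e₃(Γ̄) ≤ 24, where n is the index of Γ̄ (for such genus-zero subgroups this quantity necessarily lies in {6, 12, 18, 24}). These are exactly the conjugacy classes of subgroups of PSL(2,ℤ) occurring as modular monodromy groups of elliptically fibered K3 surfaces. -/

import Mathlib

open Matrix

/-- `SL(2,ℤ)`: the group of 2×2 integer matrices of determinant 1. -/
abbrev SL2Z := Matrix.SpecialLinearGroup (Fin 2) ℤ

instance : Fact (Even (Fintype.card (Fin 2))) := ⟨by simp⟩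

/-- The subgroup `{±I}` of `SL(2,ℤ)`. -/
def pmOne : Subgroup SL2Z := Subgroup.zpowers (-1 : SL2Z)

instance : pmOne.Normal := by
  constructor
  intro x hx g
  obtain ⟨n, rfl⟩ := hx
  have h : Commute ((-1 : SL2Z) ^ n) g := (Commute.neg_one_left g).zpow_left n
  refine ⟨n, ?_⟩
  rw [← h.eq, mul_assoc, mul_inv_cancel, mul_one]

/-- `PSL(2,ℤ)`, the modular group, as the quotient of `SL(2,ℤ)` by `{±I}`. -/
abbrev PSL2Z := SL2Z ⧸ pmOne

/-- The natural projection `ξ : SL(2,ℤ) → PSL(2,ℤ)`. -/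
def xi : SL2Z →* PSL2Z := QuotientGroup.mk' pmOne

/-- The element `S` of `PSL(2,ℤ)`, the image of `[[0,-1],[1,0]]`. -/
def Sp : PSL2Z := xi ⟨!![0, -1; 1, 0], by norm_num [Matrix.det_fin_two_of]⟩

/-- The element `T` of `PSL(2,ℤ)`, the image of `[[1,1],[0,1]]`. -/
def Tp : PSL2Z := xi ⟨!![1, 1; 0, 1], by norm_num [Matrix.det_fin_two_of]⟩

/-- The number of left cosets in `PSL(2,ℤ)/Γ` fixed by `g` (for the
left-multiplication action).  For `g = S` this is `e₂(Γ)`, for `g = S*T` it is `e₃(Γ)`. -/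
noncomputable def nFix (g : PSL2Z) (Γ : Subgroup PSL2Z) : ℕ :=
  Nat.card {x : PSL2Z ⧸ Γ // g • x = x}

/-- The number of orbits of the cyclic subgroup generated by `g` on `PSL(2,ℤ)/Γ`.
For `g = S, S*T, T` these are `c₂(Γ), c₃(Γ), h(Γ)` respectively. -/
noncomputable def nOrb (g : PSL2Z) (Γ : Subgroup PSL2Z) : ℕ :=
  Nat.card (MulAction.orbitRel.Quotient (Subgroup.zpowers g) (PSL2Z ⧸ Γ))

/-- `Γ` has genus zero: `c₂(Γ) + c₃(Γ) + h(Γ) = index(Γ) + 2`. -/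
def GenusZero (Γ : Subgroup PSL2Z) : Prop :=
  nOrb Sp Γ + nOrb (Sp * Tp) Γ + nOrb Tp Γ = Γ.index + 2

/-- `Γ` is torsion free: it contains no nontrivial element of finite order. -/
def TorsionFree (Γ : Subgroup PSL2Z) : Prop :=
  ∀ x ∈ Γ, x ≠ 1 → ¬ IsOfFinOrder x

/-- Two subgroups of a group are conjugate. -/
def SubgroupConj {G : Type*} [Group G] (H K : Subgroup G) : Prop :=
  ∃ g : G, Subgroup.map (MulAut.conj g).toMonoidHom H = K

/-- The number of conjugacy classes of subgroups of `PSL(2,ℤ)` satisfying `P`. -/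
noncomputable def countClasses (P : Subgroup PSL2Z → Prop) : ℕ :=
  Nat.card (Quot fun A B : {Γ : Subgroup PSL2Z // P Γ} => SubgroupConj A.1 B.1)

/-- The index of the torsion free subgroup `Γ^tf` associated to `Γ`:
`index(Γ) + 3·e₂(Γ) + 2·e₃(Γ)`. -/
noncomputable def tfIdx (Γ : Subgroup PSL2Z) : ℕ :=
  Γ.index + 3 * nFix Sp Γ + 2 * nFix (Sp * Tp) Γ

/-!
The group `PSL(2,ℤ)` is the free product of the cyclic groups generated by `S` and `ST`. Hence the
conjugacy classes of its subgroups of finite index correspond to the finite transitive pairs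
`(σ, ρ)` of permutations with `σ² = ρ³ = 1`, up to isomorphism. Such a pair is a connected map on an
oriented surface whose darts are permuted by `ρ` around the vertices and by `σ` along the edges,
and genus zero means that the surface is a sphere.

A map rooted at a dart is explored deterministically along the boundary of its explored part. The
letters describing how each boundary dart continues form its code, which determines the rooted map.
For a planar map, an edge back to the explored part always ends on the boundary component from which
it starts (the Jordan curve property), so all codes are generated by a search in which the two
resulting components are explored separately. Each class is counted at its rooting with the least
code. The size `n + 3e₂ + 2e₃` weighs a half-edge by 3 and a vertex of degree 1 or 3 by 3. This
bounds the depth of the search, and Euler's formula shows the size to be a multiple of 6.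
-/

namespace ModularMonodromy

/-! ### Planar pairs of permutations -/

section Setoid

variable {α : Type*}

/-- The number of classes of an equivalence relation (`0` if there are infinitely many). -/
noncomputable def numClasses (s : Setoid α) : ℕ :=
  Nat.card (Quotient s)

/-- The relation obtained from `s` by merging the classes of `a` and `b`. -/
noncomputable def mergeClasses (s : Setoid α) (a b : α) : Setoid α :=
  open Classical in Setoid.ker fun x => if s x b then Quotient.mk s a else Quotient.mk s x

theorem le_mergeClasses (s : Setoid α) (a b : α) : s ≤ mergeClasses s a b := by
  intro x y h
  have hb : s x b ↔ s y b := ⟨s.trans (s.symm h), s.trans h⟩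
  classical
  change ite _ _ _ = ite _ _ _
  simp only [hb, Quotient.sound h]

theorem mergeClasses_rel (s : Setoid α) (a b : α) : mergeClasses s a b a b := by
  classical
  change ite _ _ _ = ite _ _ _
  rw [if_pos (s.refl b), ite_self]

variable [Finite α]

theorem numClasses_anti {s t : Setoid α} (h : s ≤ t) : numClasses t ≤ numClasses s :=
  Nat.card_le_card_of_surjective (Quotient.map id fun _ _ hab => h hab)
    (Quotient.ind fun x => ⟨Quotient.mk s x, rfl⟩)

theorem numClasses_lt {s t : Setoid α} (h : s ≤ t) {a b : α} (hab : t a b) (hs : ¬ s a b) :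
    numClasses t < numClasses s := by
  refine lt_of_le_of_ne (numClasses_anti h) fun heq => hs (Quotient.exact ?_)
  let f : Quotient s → Quotient t := Quotient.map id fun _ _ hab => h hab
  have hf : Function.Surjective f := Quotient.ind fun x => ⟨Quotient.mk s x, rfl⟩
  exact ((Nat.bijective_iff_surjective_and_card f).2 ⟨hf, heq.symm⟩).injective
    (Quotient.sound hab)

theorem numClasses_le_mergeClasses (s : Setoid α) (a b : α) :
    numClasses s ≤ numClasses (mergeClasses s a b) + 1 := by
  classical
  let g : Option (Quotient (mergeClasses s a b)) → Quotient s
    | none => Quotient.mk s b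
    | some q => Quotient.lift (s := mergeClasses s a b)
        (fun x => if s x b then Quotient.mk s a else Quotient.mk s x) (fun _ _ h => h) q
  have hg : Function.Surjective g := Quotient.ind fun x => by
    by_cases hx : s x b
    · exact ⟨none, (Quotient.sound hx).symm⟩
    · exact ⟨some (Quotient.mk _ x), if_neg hx⟩
  simpa only [numClasses, Finite.card_option] using Nat.card_le_card_of_surjective g hg

end Setoid

section Perm

open Equiv Equiv.Perm

variable {α : Type*}

theorem sameCycle_setoid_le {π : Perm α} {t : Setoid α} (h : ∀ x, t x (π x)) :
    SameCycle.setoid π ≤ t := by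
  rintro x _ ⟨k, rfl⟩
  induction k with
  | zero => exact t.refl _
  | succ n ih =>
    rw [add_comm, _root_.zpow_one_add, Perm.mul_apply]
    exact t.trans ih (h _)
  | pred n ih =>
    refine t.trans ih (t.symm ?_)
    convert h _ using 1
    rw [← Perm.mul_apply, ← _root_.zpow_one_add, add_sub_cancel]

theorem sameCycle_setoid_apply (π : Perm α) (x : α) : SameCycle.setoid π x (π x) :=
  ⟨1, by simp⟩

/-- The orbit relation of the group generated by `ρ` and `τ`. -/
def orbitSetoid (ρ τ : Perm α) : Setoid α :=
  SameCycle.setoid ρ ⊔ SameCycle.setoid τ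

theorem orbitSetoid_left (ρ τ : Perm α) (x : α) : orbitSetoid ρ τ x (ρ x) :=
  (le_sup_left : SameCycle.setoid ρ ≤ orbitSetoid ρ τ) (sameCycle_setoid_apply ρ x)

theorem orbitSetoid_right (ρ τ : Perm α) (x : α) : orbitSetoid ρ τ x (τ x) :=
  (le_sup_right : SameCycle.setoid τ ≤ orbitSetoid ρ τ) (sameCycle_setoid_apply τ x)

theorem orbitSetoid_le {ρ τ : Perm α} {t : Setoid α} (hρ : ∀ x, t x (ρ x))
    (hτ : ∀ x, t x (τ x)) : orbitSetoid ρ τ ≤ t :=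
  sup_le (sameCycle_setoid_le hρ) (sameCycle_setoid_le hτ)

theorem sameCycle_mul_le_orbitSetoid (ρ τ : Perm α) :
    SameCycle.setoid (ρ * τ) ≤ orbitSetoid ρ τ :=
  sameCycle_setoid_le fun x =>
    (orbitSetoid ρ τ).trans (orbitSetoid_right ρ τ x) (orbitSetoid_left ρ τ (τ x))

/-- `τ` performs some of the transpositions of the involution `σ`: it is a partial gluing. -/
def IsPartialGluing (τ σ : Perm α) : Prop :=
  ∀ x, τ x = x ∨ τ x = σ x

theorem IsPartialGluing.apply_eq_self {τ σ : Perm α} {a : α} (h : IsPartialGluing τ σ)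
    (hσ : ∀ x, σ (σ x) = x) (ha : τ a = a) : τ (σ a) = σ a := by
  rcases h (σ a) with h1 | h1
  · exact h1
  · rw [hσ] at h1
    rw [← τ.injective (ha.trans h1.symm), ha]

variable [DecidableEq α]

theorem IsPartialGluing.mul_swap_apply {τ σ : Perm α} {a : α} (h : IsPartialGluing τ σ)
    (hσ : ∀ x, σ (σ x) = x) (ha : τ a = a) (x : α) :
    (τ * swap a (σ a)) x = if x = a ∨ x = σ a then σ x else τ x := by
  rw [Perm.mul_apply, swap_apply_def]
  by_cases hxa : x = a
  · subst hxa
    rw [if_pos rfl, if_pos (Or.inl rfl), h.apply_eq_self hσ ha]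
  by_cases hxb : x = σ a
  · subst hxb
    rw [if_neg hxa, if_pos rfl, if_pos (Or.inr rfl), ha, hσ]
  rw [if_neg hxa, if_neg hxb, if_neg (not_or.2 ⟨hxa, hxb⟩)]

theorem IsPartialGluing.mul_swap {τ σ : Perm α} {a : α} (h : IsPartialGluing τ σ)
    (hσ : ∀ x, σ (σ x) = x) (ha : τ a = a) :
    IsPartialGluing (τ * swap a (σ a)) σ := by
  intro x
  rw [h.mul_swap_apply hσ ha]
  split_ifs
  · exact Or.inr rfl
  · exact h x

theorem setoid_mul_swap_apply {π : Perm α} {a b : α} {t : Setoid α} (h : ∀ x, t x (π x))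
    (hab : t a b) (x : α) : t x ((π * swap a b) x) := by
  refine t.trans ?_ (h _)
  rw [swap_apply_def]
  split_ifs with ha hb
  · exact ha ▸ hab
  · exact hb ▸ t.symm hab
  · exact t.refl x

theorem sameCycle_mul_swap_of_not_sameCycle [Finite α] {π : Perm α} {a b : α}
    (hab : ¬ π.SameCycle a b) : (π * swap a b).SameCycle a b := by
  have along (k : ℕ) : (π * swap a b).SameCycle a ((π ^ (k + 1)) b) := by
    induction k with
    | zero => exact ⟨1, by simp⟩
    | succ k ih =>
      by_cases hb : (π ^ (k + 1)) b = b
      · rw [pow_succ', Perm.mul_apply, hb]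
        exact ⟨1, by simp⟩
      · have ha : (π ^ (k + 1)) b ≠ a := fun h =>
          hab (SameCycle.symm ⟨(k + 1 : ℕ), by rw [zpow_natCast, h]⟩)
        have hstep : (π * swap a b) ((π ^ (k + 1)) b) = (π ^ (k + 1 + 1)) b := by
          rw [Perm.mul_apply, swap_apply_of_ne_of_ne ha hb, pow_succ' π (k + 1), Perm.mul_apply]
        exact ih.trans (hstep ▸ sameCycle_setoid_apply _ _)
  have := along (orderOf π - 1)
  rwa [Nat.sub_add_cancel (orderOf_pos π), pow_orderOf_eq_one] at this

theorem sameCycle_setoid_le_of_mul_swap_le {π : Perm α} {a b : α} {t : Setoid α}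
    (ht : SameCycle.setoid (π * swap a b) ≤ t) (htab : t a b) : SameCycle.setoid π ≤ t := by
  rw [← mul_one π, ← Equiv.swap_mul_self a b, ← mul_assoc]
  exact sameCycle_setoid_le (setoid_mul_swap_apply (fun x => ht (sameCycle_setoid_apply _ x)) htab)

theorem numClasses_sameCycle_mul_swap_le [Finite α] (π : Perm α) (a b : α) :
    numClasses (SameCycle.setoid (π * swap a b)) ≤ numClasses (SameCycle.setoid π) + 1 :=
  (numClasses_le_mergeClasses _ a b).trans (Nat.add_le_add_right (numClasses_anti
    (sameCycle_setoid_le_of_mul_swap_le (le_mergeClasses _ a b) (mergeClasses_rel _ a b))) 1)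

theorem numClasses_sameCycle_mul_swap_lt [Finite α] {π : Perm α} {a b : α}
    (h : ¬ π.SameCycle a b) :
    numClasses (SameCycle.setoid (π * swap a b)) < numClasses (SameCycle.setoid π) :=
  have hj := sameCycle_mul_swap_of_not_sameCycle h
  numClasses_lt (sameCycle_setoid_le_of_mul_swap_le le_rfl hj) hj h

variable [Fintype α]

/-- For an involution `τ` this is `4 g + 2 c`, where `g` is the genus of the (possibly
disconnected) surface carrying the map with vertices the cycles of `ρ` and edges the 2-cycles
of `τ`, and `c` is the number of cycles of `ρ`. -/
noncomputable def gluingDefect (ρ τ : Perm α) : ℤ :=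
  4 * numClasses (orbitSetoid ρ τ) - 2 * numClasses (SameCycle.setoid (ρ * τ)) + τ.support.card

theorem card_support_mul_swap {τ : Perm α} {a b : α} (hab : a ≠ b) (ha : τ a = a) (hb : τ b = b) :
    (τ * swap a b).support.card = τ.support.card + 2 := by
  have hd : τ.Disjoint (swap a b) := fun x => by
    rw [swap_apply_def]
    split_ifs with hxa hxb
    · exact Or.inl (hxa ▸ ha)
    · exact Or.inl (hxb ▸ hb)
    · exact Or.inr rfl
  rw [hd.card_support_mul, card_support_swap hab]

theorem gluingDefect_le_mul_swap (ρ τ : Perm α) {a b : α} (hab : a ≠ b) (ha : τ a = a)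
    (hb : τ b = b) :
    gluingDefect ρ τ ≤ gluingDefect ρ (τ * swap a b) ∧
      (orbitSetoid ρ τ a b → ¬ (ρ * τ).SameCycle a b →
        gluingDefect ρ τ < gluingDefect ρ (τ * swap a b)) := by
  have orbits_le {t : Setoid α} (ht : orbitSetoid ρ τ ≤ t) (htab : t a b) :
      numClasses t ≤ numClasses (orbitSetoid ρ (τ * swap a b)) :=
    numClasses_anti (orbitSetoid_le (fun x => ht (orbitSetoid_left ρ τ x))
      (setoid_mul_swap_apply (fun x => ht (orbitSetoid_right ρ τ x)) htab))
  have horb : numClasses (orbitSetoid ρ τ) ≤ numClasses (orbitSetoid ρ (τ * swap a b)) + 1 :=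
    (numClasses_le_mergeClasses _ a b).trans
      (Nat.add_le_add_right (orbits_le (le_mergeClasses _ a b) (mergeClasses_rel _ a b)) 1)
  have hcyc := numClasses_sameCycle_mul_swap_le (ρ * τ) a b
  have hcyc_lt := numClasses_sameCycle_mul_swap_lt (π := ρ * τ) (a := a) (b := b)
  rw [mul_assoc] at hcyc hcyc_lt
  unfold gluingDefect
  rw [card_support_mul_swap hab ha hb]
  constructor
  · by_cases h : (ρ * τ).SameCycle a b
    · have := orbits_le le_rfl (sameCycle_mul_le_orbitSetoid ρ τ h)
      omega
    · have := hcyc_lt h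
      omega
  · intro horb h
    have := orbits_le le_rfl horb
    have := hcyc_lt h
    omega

namespace IsPartialGluing

variable {τ σ : Perm α} {a : α}

theorem gluingDefect_le (ρ : Perm α) (h : IsPartialGluing τ σ) (hσ : ∀ x, σ (σ x) = x) :
    gluingDefect ρ τ ≤ gluingDefect ρ σ := by
  induction hm : (Finset.univ.filter fun x => τ x ≠ σ x).card using Nat.strong_induction_on
    generalizing τ with
  | _ m ih =>
    by_cases heq : τ = σ
    · rw [heq]
    obtain ⟨a, ha⟩ : ∃ a, τ a ≠ σ a := not_forall.1 fun h => heq (Equiv.ext h)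
    have hfix : τ a = a := (h a).resolve_right ha
    have hstep := (gluingDefect_le_mul_swap ρ τ (fun h' => ha (hfix.trans h')) hfix
      (h.apply_eq_self hσ hfix)).1
    refine hstep.trans (ih _ ?_ (h.mul_swap hσ hfix) rfl)
    rw [← hm]
    refine Finset.card_lt_card (Finset.ssubset_iff_of_subset ?_ |>.2 ⟨a, ?_, ?_⟩)
    · intro x
      simp only [Finset.mem_filter, Finset.mem_univ, true_and, h.mul_swap_apply hσ hfix]
      split_ifs
      · exact fun hx => absurd rfl hx
      · exact id
    · simpa only [Finset.mem_filter, Finset.mem_univ, true_and] using ha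
    · simp only [Finset.mem_filter, h.mul_swap_apply hσ hfix, true_or, if_true, ne_eq,
        not_true_eq_false, and_false, not_false_eq_true]

/-- In a planar map, an edge joining two points of the same component of a partially glued map
has both ends on the same boundary component: otherwise it would create a handle. -/
theorem sameCycle {ρ : Perm α} (h : IsPartialGluing τ σ) (hσ : ∀ x, σ (σ x) = x)
    (planar : gluingDefect ρ σ ≤ gluingDefect ρ 1) (ha : τ a = a) (hne : σ a ≠ a)
    (horb : orbitSetoid ρ τ a (σ a)) : (ρ * τ).SameCycle a (σ a) := by
  by_contra hcyc
  have hlt := (gluingDefect_le_mul_swap ρ τ hne.symm ha (h.apply_eq_self hσ ha)).2 horb hcyc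
  have hσ' := (h.mul_swap hσ ha).gluingDefect_le ρ hσ
  have hτ : gluingDefect ρ 1 ≤ gluingDefect ρ τ := by
    refine gluingDefect_le (τ := 1) ρ (fun _ => Or.inl rfl) fun x => ?_
    rcases h x with hx | hx
    · rw [hx, hx]
    · rcases h (σ x) with hσx | hσx
      · exact τ.injective (by rw [hx, hσx, hσx])
      · rw [hx, hσx, hσ]
  omega

end IsPartialGluing

end Perm

/-! ### Boundary walks -/

section Boundary

variable {α : Type*}

/-- `y` is reached from `x` by iterating `f` at least once, all intermediate points lying in `s`:
for `y ∉ s`, it is the image of `x` under the first-return map of `f` to the complement of `s`. -/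
inductive ReachesVia (f : α → α) (s : Set α) : α → α → Prop
  | single (x : α) : ReachesVia f s x (f x)
  | head {x y : α} : f x ∈ s → ReachesVia f s (f x) y → ReachesVia f s x y

namespace ReachesVia

variable {f g : α → α} {s t : Set α} {x y z : α}

theorem trans (hxy : ReachesVia f s x y) (hy : y ∈ s) (hyz : ReachesVia f s y z) :
    ReachesVia f s x z := by
  induction hxy with
  | single => exact head hy hyz
  | head hs _ ih => exact head hs (ih hy hyz)

theorem right_unique (hxy : ReachesVia f s x y) (hy : y ∉ s) (hxz : ReachesVia f s x z)
    (hz : z ∉ s) : y = z := by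
  induction hxy with
  | single =>
    cases hxz with
    | single => rfl
    | head hs _ => exact absurd hs hy
  | head hs _ ih =>
    cases hxz with
    | single => exact absurd hs hz
    | head _ hxz => exact ih hy hxz

theorem congr (hxy : ReachesVia f s x y) (hst : s ⊆ t) (hs : ∀ w ∈ s, g w = f w)
    (hz : g z = f x) : ReachesVia g t z y := by
  induction hxy generalizing z with
  | single => exact hz ▸ single z
  | head hfx _ ih => exact head (hz ▸ hst hfx) (hz ▸ ih (hs _ hfx))

theorem isChain_congr {l : List α} (h : List.IsChain (ReachesVia f s) (x :: (l ++ [y])))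
    (hst : s ⊆ t) (hs : ∀ w ∈ s, g w = f w) (hl : ∀ w ∈ l, g w = f w) (hz : g z = f x) :
    List.IsChain (ReachesVia g t) (z :: (l ++ [y])) := by
  induction l generalizing x z with
  | nil => exact List.isChain_pair.2 ((List.isChain_pair.1 h).congr hst hs hz)
  | cons w l ih =>
    obtain ⟨hxw, hl'⟩ := List.isChain_cons_cons.1 h
    exact List.isChain_cons_cons.2 ⟨hxw.congr hst hs hz,
      ih hl' (fun v hv => hl v (List.mem_cons_of_mem w hv)) (hl w List.mem_cons_self)⟩

end ReachesVia

theorem chain_of_chain_cons {r : α → α → Prop} {a : α} {l : List α}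
    (ha : ∀ x y, r x a → r a y → r x y) (h : Cycle.Chain r (a :: l : List α)) :
    Cycle.Chain r (l : Cycle α) := by
  cases l with
  | nil => exact Cycle.Chain.nil r
  | cons x l =>
    rw [Cycle.chain_coe_cons, List.cons_append, List.isChain_cons_cons,
      ← List.cons_append, List.isChain_append] at h
    obtain ⟨hax, hl, -, hlast⟩ := h
    rw [Cycle.chain_coe_cons, ← List.cons_append, List.isChain_append]
    refine ⟨hl, List.isChain_singleton x, fun y hy z hz => ?_⟩
    obtain rfl : x = z := Option.some_inj.1 hz
    exact ha _ _ (hlast y hy a rfl) hax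

theorem chain_coe_append_comm {r : α → α → Prop} {l₁ l₂ : List α} :
    Cycle.Chain r (l₁ ++ l₂ : List α) ↔ Cycle.Chain r (l₂ ++ l₁ : List α) := by
  rw [Cycle.coe_eq_coe.2 List.isRotated_append]

theorem exists_rel_of_chain {r : α → α → Prop} {l : List α} (h : Cycle.Chain r (l : Cycle α))
    {x : α} (hx : x ∈ l) : ∃ y ∈ l, r x y := by
  obtain ⟨l₁, l₂, rfl⟩ := List.append_of_mem hx
  rw [chain_coe_append_comm, List.cons_append, Cycle.chain_coe_cons] at h
  cases hl : l₂ ++ l₁ with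
  | nil =>
    rw [hl] at h
    exact ⟨x, hx, (List.isChain_cons_cons.1 h).1⟩
  | cons y l =>
    rw [hl] at h
    have hy : y ∈ l₂ ++ l₁ := hl ▸ List.mem_cons_self
    refine ⟨y, ?_, (List.isChain_cons_cons.1 h).1⟩
    rw [List.mem_append] at hy
    exact List.mem_append.2 (hy.symm.imp id (List.mem_cons_of_mem x))

/-- The points of `l`, in this cyclic order, are those visited by one orbit of `f` outside `s`. -/
def IsBoundary (f : α → α) (s : Set α) (l : List α) : Prop :=
  Cycle.Chain (ReachesVia f s) l

namespace IsBoundary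

variable {f g : α → α} {s t : Set α} {a b : α} {l l₁ l₂ : List α}

theorem congr (h : IsBoundary f s l) (hst : s ⊆ t) (hs : ∀ w ∈ s, g w = f w)
    (hl : ∀ w ∈ l, g w = f w) : IsBoundary g t l := by
  cases l with
  | nil => exact Cycle.Chain.nil _
  | cons x l =>
    exact ReachesVia.isChain_congr h hst hs (fun w hw => hl w (List.mem_cons_of_mem x hw))
      (hl x List.mem_cons_self)

theorem of_cons (h : IsBoundary f s (a :: l)) (ha : a ∈ s) : IsBoundary f s l :=
  chain_of_chain_cons (fun _ _ hx hy => hx.trans ha hy) h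

theorem append_comm : IsBoundary f s (l₁ ++ l₂) ↔ IsBoundary f s (l₂ ++ l₁) :=
  chain_coe_append_comm

/-- Gluing two points of one boundary component separates it into two. -/
theorem split (h : IsBoundary f s (a :: (l₁ ++ b :: l₂))) (hst : s ⊆ t) (hs : ∀ w ∈ s, g w = f w)
    (hl : ∀ w ∈ l₁ ++ l₂, g w = f w) (hat : a ∈ t) (hbt : b ∈ t) (ha : g a = f b)
    (hb : g b = f a) : IsBoundary g t l₁ ∧ IsBoundary g t l₂ := by
  rw [IsBoundary, Cycle.chain_coe_cons, List.append_assoc, List.cons_append, ← List.cons_append,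
    List.isChain_split] at h
  exact ⟨of_cons (a := b) (ReachesVia.isChain_congr h.1 hst hs
      (fun w hw => hl w (List.mem_append_left l₂ hw)) hb) hbt,
    of_cons (a := a) (ReachesVia.isChain_congr h.2 hst hs
      (fun w hw => hl w (List.mem_append_right l₁ hw)) ha) hat⟩

/-- Gluing points of two boundary components joins them into one. -/
theorem join (h₁ : IsBoundary f s (a :: l₁)) (h₂ : IsBoundary f s (b :: l₂)) (hst : s ⊆ t)
    (hs : ∀ w ∈ s, g w = f w) (hl : ∀ w ∈ l₁ ++ l₂, g w = f w) (hat : a ∈ t) (hbt : b ∈ t)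
    (ha : g a = f b) (hb : g b = f a) : IsBoundary g t (l₂ ++ l₁) := by
  have h : IsBoundary g t (b :: (l₁ ++ a :: l₂)) := by
    rw [IsBoundary, Cycle.chain_coe_cons, List.append_assoc, List.cons_append, ← List.cons_append,
      List.isChain_split]
    exact ⟨ReachesVia.isChain_congr h₁ hst hs (fun w hw => hl w (List.mem_append_left l₂ hw)) hb,
      ReachesVia.isChain_congr h₂ hst hs (fun w hw => hl w (List.mem_append_right l₁ hw)) ha⟩
  exact of_cons (append_comm.1 (of_cons h hbt)) hat

theorem mem_of_iterate (h : IsBoundary f s l) (hl : ∀ x ∈ l, x ∉ s) (ha : a ∈ l) (k : ℕ)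
    (hk : f^[k] a ∉ s) : f^[k] a ∈ l := by
  have visited : f^[k] a ∈ l ∨ f^[k] a ∈ s ∧ ∃ z ∈ l, ReachesVia f s z (f^[k] a) := by
    clear hk
    induction k with
    | zero => exact Or.inl ha
    | succ k ih =>
      rw [Function.iterate_succ_apply']
      obtain ⟨z, hz, hreach⟩ : ∃ z ∈ l, ReachesVia f s z (f (f^[k] a)) := by
        rcases ih with hk | ⟨hks, z, hz, hreach⟩
        · exact ⟨_, hk, .single _⟩
        · exact ⟨z, hz, hreach.trans hks (.single _)⟩
      by_cases hs : f (f^[k] a) ∈ s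
      · exact Or.inr ⟨hs, z, hz, hreach⟩
      · obtain ⟨y, hy, hzy⟩ := exists_rel_of_chain h hz
        exact Or.inl (hreach.right_unique hs hzy (hl y hy) ▸ hy)
  exact visited.resolve_right fun hs => hk hs.1

end IsBoundary

end Boundary

/-! ### The boundary code of a rooted map -/

section Code

-- The functions evaluated by the kernel are given by explicit recursors: these reduce several
-- times faster than the terms produced by structural recursion.

variable {α : Type*} [BEq α]

/-- `3 + i + j` for the first position `i` of `b` in the list, or `x` if there is none, as a
function of `j + 3`. -/
noncomputable def locate (b : α) (x : ℕ) (l : List α) : ℕ → ℕ :=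
  List.rec (fun _ => x) (fun y _ ih j => bif b == y then j else ih (Nat.succ j)) l

/-- The letter recording how the first dart `a` of a boundary `a :: l` of the explored part of a
map `(σ, ρ)` continues: `0` for a half-edge, `j + 3` for an edge to the `j`-th dart of `l`, and
`1` or `2` for an edge to a new vertex of degree 1 or 3. -/
noncomputable def letter (σ ρ : α → α) (a : α) (l : List α) : ℕ :=
  bif σ a == a then 0 else locate (σ a) (bif ρ (σ a) == σ a then 1 else 2) l 3

/-- The boundary after processing a dart with letter `x`, where `y` and `z` are the remaining
darts of the new vertex if this has degree 3. -/
def advance (x : ℕ) (y z : α) (l : List α) : List α :=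
  match x with
  | 0 => l
  | 1 => l
  | 2 => y :: z :: l
  | j + 3 => l.eraseIdx j

/-- The letters met when exploring `(σ, ρ)` from the given boundary, in at most `f` steps. -/
noncomputable def codeFrom (σ ρ : α → α) (f : ℕ) : List α → List ℕ :=
  Nat.rec (fun _ => []) (fun _ ih l => match l with
    | [] => []
    | a :: l => letter σ ρ a l ::
        ih (advance (letter σ ρ a l) (ρ (σ a)) (ρ (ρ (σ a))) l)) f

/-- The code of the map `(σ, ρ)` rooted at the dart `d`. The first entry tells whether the root
vertex has degree 1 or 3; 25 steps suffice for the maps of at most 24 darts considered here. -/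
noncomputable def code (σ ρ : α → α) (d : α) : List ℕ :=
  bif ρ d == d then 0 :: codeFrom σ ρ 25 [d] else 1 :: codeFrom σ ρ 25 [d, ρ d, ρ (ρ d)]

theorem codeFrom_nil (σ ρ : α → α) (f : ℕ) : codeFrom σ ρ f [] = [] := by
  cases f <;> rfl

theorem codeFrom_cons (σ ρ : α → α) (f : ℕ) (a : α) (l : List α) :
    codeFrom σ ρ (f + 1) (a :: l) = letter σ ρ a l ::
      codeFrom σ ρ f (advance (letter σ ρ a l) (ρ (σ a)) (ρ (ρ (σ a))) l) :=
  rfl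

theorem locate_cons (b : α) (x : ℕ) (y : α) (l : List α) (j : ℕ) :
    locate b x (y :: l) j = bif b == y then j else locate b x l (j + 1) :=
  rfl

theorem advance_map {α β : Type*} (ι : α → β) (x : ℕ) (y z : α) (l : List α) :
    advance x (ι y) (ι z) (l.map ι) = (advance x y z l).map ι :=
  match x with
  | 0 | 1 | 2 => rfl
  | _ + 3 => List.eraseIdx_map ..

section Map

variable [LawfulBEq α] {β : Type*} [BEq β] [LawfulBEq β] {ι : α → β}

theorem beq_map (hι : Function.Injective ι) (x y : α) : (ι x == ι y) = (x == y) := by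
  rw [Bool.eq_iff_iff, beq_iff_eq, beq_iff_eq, hι.eq_iff]

theorem locate_map (hι : Function.Injective ι) (b : α) (x : ℕ) (l : List α) (j : ℕ) :
    locate (ι b) x (l.map ι) j = locate b x l j := by
  induction l generalizing j with
  | nil => rfl
  | cons y l ih => rw [List.map_cons, locate_cons, locate_cons, beq_map hι, ih]

variable {σ ρ : α → α} {σ' ρ' : β → β}

theorem letter_map (hι : Function.Injective ι) (hσ : ∀ x, σ' (ι x) = ι (σ x))
    (hρ : ∀ x, ρ' (ι x) = ι (ρ x)) (a : α) (l : List α) :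
    letter σ' ρ' (ι a) (l.map ι) = letter σ ρ a l := by
  simp only [letter, hσ, hρ, beq_map hι, locate_map hι]

theorem codeFrom_map (hι : Function.Injective ι) (hσ : ∀ x, σ' (ι x) = ι (σ x))
    (hρ : ∀ x, ρ' (ι x) = ι (ρ x)) (f : ℕ) (l : List α) :
    codeFrom σ' ρ' f (l.map ι) = codeFrom σ ρ f l := by
  induction f generalizing l with
  | zero => rfl
  | succ f ih =>
    cases l with
    | nil => rfl
    | cons a l =>
      rw [List.map_cons, codeFrom_cons, codeFrom_cons, letter_map hι hσ hρ, hσ, hρ, hρ,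
        advance_map, ih]

theorem code_map (hι : Function.Injective ι) (hσ : ∀ x, σ' (ι x) = ι (σ x))
    (hρ : ∀ x, ρ' (ι x) = ι (ρ x)) (d : α) : code σ' ρ' (ι d) = code σ ρ d := by
  simp only [code, hρ, beq_map hι]
  rw [← codeFrom_map hι hσ hρ, ← codeFrom_map hι hσ hρ]
  rfl

end Map

variable [LawfulBEq α] {σ ρ : α → α} {a : α}

theorem letter_of_apply_eq (h : σ a = a) (l : List α) : letter σ ρ a l = 0 := by
  rw [letter, h, beq_self_eq_true, cond_true]

theorem locate_append_of_notMem {b : α} {x : ℕ} {l₁ l₂ : List α} (h : b ∉ l₁) (j : ℕ) :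
    locate b x (l₁ ++ l₂) j = locate b x l₂ (l₁.length + j) := by
  induction l₁ generalizing j with
  | nil => rw [List.length_nil, Nat.zero_add, List.nil_append]
  | cons y l ih =>
    rw [List.mem_cons, not_or] at h
    rw [List.cons_append, locate_cons, beq_false_of_ne h.1, cond_false, ih h.2, List.length_cons,
      Nat.add_right_comm, Nat.add_assoc]

theorem letter_of_mem (hσ : σ a ≠ a) {l₁ : List α} (h : σ a ∉ l₁) (l₂ : List α) :
    letter σ ρ a (l₁ ++ σ a :: l₂) = l₁.length + 3 := by
  rw [letter, beq_false_of_ne hσ, cond_false, locate_append_of_notMem h, locate_cons,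
    beq_self_eq_true, cond_true]

theorem letter_of_notMem (hσ : σ a ≠ a) {l : List α} (h : σ a ∉ l) :
    letter σ ρ a l = bif ρ (σ a) == σ a then 1 else 2 := by
  rw [letter, beq_false_of_ne hσ, cond_false, ← List.append_nil l, locate_append_of_notMem h]
  rfl

end Code

/-! ### Enumeration of planar maps -/

/-- The `i`-th digit of `s` in base 32. -/
def digit (s i : ℕ) : ℕ :=
  Nat.mod (Nat.div s (Nat.pow 32 i)) 32

/-- Replaces the `i`-th digit of `s` in base 32, assumed to be zero, by `x`. -/
def put (s i x : ℕ) : ℕ :=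
  Nat.add s (Nat.mul x (Nat.pow 32 i))

/-- Makes `a` and `b` partners in the involution encoded by `s`. -/
def glue (s a b : ℕ) : ℕ :=
  put (put s a b) b a

theorem digit_put {s i x : ℕ} (hs : digit s i = 0) (hx : x < 32) (j : ℕ) :
    digit (put s i x) j = if j = i then x else digit s j := by
  change s / 32 ^ i % 32 = 0 at hs
  change (s + x * 32 ^ i) / 32 ^ j % 32 = if j = i then x else s / 32 ^ j % 32
  rcases lt_trichotomy j i with h | rfl | h
  · obtain ⟨k, rfl⟩ := Nat.exists_eq_add_of_lt h
    rw [if_neg h.ne, show x * 32 ^ (j + k + 1) = 32 ^ j * (32 * (x * 32 ^ k)) by ring,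
      Nat.add_mul_div_left _ _ (by positivity), Nat.add_mul_mod_self_left]
  · rw [if_pos rfl, Nat.add_mul_div_right _ _ (by positivity), Nat.add_mod, hs, Nat.zero_add,
      Nat.mod_mod, Nat.mod_eq_of_lt hx]
  · obtain ⟨k, rfl⟩ := Nat.exists_eq_add_of_lt h
    have hdiv : (s / 32 ^ i + x) / 32 = s / 32 ^ i / 32 := by omega
    rw [if_neg h.ne', Nat.add_assoc, Nat.pow_add, ← Nat.div_div_eq_div_mul,
      Nat.add_mul_div_right _ _ (by positivity), Nat.pow_succ', ← Nat.div_div_eq_div_mul, hdiv,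
      ← Nat.div_div_eq_div_mul, ← Nat.div_div_eq_div_mul]

/-- A pair of self-maps `σ`, `ρ` of `{0, …, size - 1}`, each encoded by the number whose digits
in base 32 are its values. -/
structure Table where
  size : ℕ
  σ : ℕ
  ρ : ℕ

/-- A partially explored planar map. The darts discovered so far are numbered consecutively; each
block lists in cyclic order the unprocessed darts on one boundary component, and the processed
ones are recorded in the table. -/
structure State where
  blocks : List (List ℕ)
  table : Table

/-- Adds a block, if it is not empty. -/
def push {α : Type*} (l : List α) (st : List (List α)) : List (List α) :=
  match l with
  | [] => st
  | _ :: _ => l :: st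

/-- Processes with letter `x` the first dart `a` of the boundary block `a :: l`; the remaining
blocks are `st`. -/
def next (x a : ℕ) (l : List ℕ) (st : List (List ℕ)) (t : Table) : State :=
  match x with
  | 0 => ⟨push l st, t.size, put t.σ a a, t.ρ⟩
  | 1 => ⟨push l st, t.size + 1, glue t.σ a t.size, put t.ρ t.size t.size⟩
  | 2 => ⟨((t.size + 1) :: (t.size + 2) :: l) :: st, t.size + 3, glue t.σ a t.size,
      put (put (put t.ρ t.size (t.size + 1)) (t.size + 1) (t.size + 2)) (t.size + 2) t.size⟩
  | j + 3 => ⟨push (l.take j) (push (l.drop (j + 1)) st), t.size, glue t.σ a (l.getD j 0), t.ρ⟩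

/-- The letters to be tried at the block `a :: l`: those in `A`, each at the cost of one unit of
the budget `b`, and the edges to the darts of `l`. -/
noncomputable def moves (A : List ℕ) (b : ℕ) (l : List ℕ) : List ℕ :=
  List.rec (bif b == 0 then [] else A) (fun _ l ih => (l.length + 3) :: ih) l

/-- The sum of `v t w` over all maps `t` obtained from the state `s` in fewer than `f` moves and
within budget `b`, where the word `w` of letters used extends `u.reverse`. -/
noncomputable def tally {M : Type*} [Zero M] [Add M] (v : Table → List ℕ → M) (A : List ℕ)
    (f : ℕ) : ℕ → State → List ℕ → M :=
  Nat.rec (fun _ _ _ => 0) (fun _ ih b s u => match s.blocks with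
    | [] => v s.table u.reverse
    | [] :: _ => 0
    | (a :: l) :: st => (moves A b l).foldr (fun x m =>
        ih (bif Nat.ble x 2 then b - 1 else b) (next x a l st s.table) (x :: u) + m) 0) f

section Tally

variable {A : List ℕ}

theorem moves_cons (b y : ℕ) (l : List ℕ) : moves A b (y :: l) = (l.length + 3) :: moves A b l :=
  rfl

theorem mem_moves_of_lt {b j : ℕ} {l : List ℕ} (hj : j < l.length) : j + 3 ∈ moves A b l := by
  induction l with
  | nil => exact absurd hj (Nat.not_lt_zero j)
  | cons y l ih =>
    rw [moves_cons, List.mem_cons]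
    rcases (Nat.lt_succ_iff.1 hj).lt_or_eq with hj | rfl
    · exact Or.inr (ih hj)
    · exact Or.inl rfl

theorem mem_moves_of_mem {x b : ℕ} (hx : x ∈ A) (hb : b ≠ 0) (l : List ℕ) : x ∈ moves A b l := by
  induction l with
  | nil =>
    obtain ⟨b, rfl⟩ := Nat.exists_eq_succ_of_ne_zero hb
    exact hx
  | cons _ _ ih => exact List.mem_cons_of_mem _ ih

theorem nodup_moves (hA : A.Nodup) (hA3 : ∀ x ∈ A, x < 3) (b : ℕ) (l : List ℕ) :
    (moves A b l).Nodup ∧ ∀ x ∈ moves A b l, x < l.length + 3 := by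
  induction l with
  | nil =>
    cases b with
    | zero => exact ⟨List.nodup_nil, fun x hx => absurd hx List.not_mem_nil⟩
    | succ b => exact ⟨hA, hA3⟩
  | cons y l ih =>
    rw [moves_cons, List.nodup_cons]
    refine ⟨⟨fun h => (ih.2 _ h).false, ih.1⟩, fun x hx => ?_⟩
    rcases List.mem_cons.1 hx with rfl | hx
    · exact Nat.lt_succ_self _
    · exact (ih.2 x hx).trans (Nat.lt_succ_self _)

theorem tally_cons {M : Type*} [Zero M] [Add M] (v : Table → List ℕ → M) (f b a : ℕ) (l : List ℕ)
    (st : List (List ℕ)) (t : Table) (u : List ℕ) :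
    tally v A (f + 1) b ⟨(a :: l) :: st, t⟩ u = (moves A b l).foldr (fun x m =>
      tally v A f (bif Nat.ble x 2 then b - 1 else b) (next x a l st t) (x :: u) + m) 0 :=
  rfl

theorem tally_map {M N : Type*} [AddZeroClass M] [AddZeroClass N] (φ : M →+ N)
    (v : Table → List ℕ → M) (f b : ℕ) (s : State) (u : List ℕ) :
    φ (tally v A f b s u) = tally (fun t w => φ (v t w)) A f b s u := by
  induction f generalizing b s u with
  | zero => exact map_zero φ
  | succ f ih =>
    obtain ⟨_ | ⟨_ | ⟨a, l⟩, st⟩, t⟩ := s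
    · rfl
    · exact map_zero φ
    · rw [tally_cons, tally_cons]
      induction moves A b l with
      | nil => exact map_zero φ
      | cons x xs ihx => rw [List.foldr_cons, List.foldr_cons, map_add, ihx, ih]

/-- The maps counted by `tally`, with their words. -/
noncomputable def leaves (A : List ℕ) : ℕ → ℕ → State → List ℕ → Multiset (Table × List ℕ) :=
  tally (fun t w => {(t, w)}) A

theorem tally_eq_sum_leaves (v : Table → List ℕ → ℕ) (f b : ℕ) (s : State) (u : List ℕ) :
    tally v A f b s u = ((leaves A f b s u).map fun p => v p.1 p.2).sum := by
  have h := tally_map (A := A) (Multiset.sumAddMonoidHom.comp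
    (Multiset.mapAddMonoidHom fun p : Table × List ℕ => v p.1 p.2)) (fun t w => {(t, w)}) f b s u
  simpa [leaves] using h.symm

theorem leaves_nil (f b : ℕ) (t : Table) (u : List ℕ) :
    leaves A (f + 1) b ⟨[], t⟩ u = {(t, u.reverse)} :=
  rfl

theorem leaves_cons (f b a : ℕ) (l : List ℕ) (st : List (List ℕ)) (t : Table) (u : List ℕ) :
    leaves A (f + 1) b ⟨(a :: l) :: st, t⟩ u = (moves A b l : Multiset ℕ).bind fun x =>
      leaves A f (bif Nat.ble x 2 then b - 1 else b) (next x a l st t) (x :: u) := by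
  simp only [Multiset.bind, Multiset.join, Multiset.map_coe, Multiset.sum_coe]
  exact List.foldr_map.symm

theorem prefix_of_mem_leaves {f b : ℕ} {s : State} {u : List ℕ} {p : Table × List ℕ}
    (hp : p ∈ leaves A f b s u) : u.reverse <+: p.2 := by
  induction f generalizing b s u with
  | zero => exact absurd hp (Multiset.notMem_zero p)
  | succ f ih =>
    obtain ⟨_ | ⟨_ | ⟨a, l⟩, st⟩, t⟩ := s
    · rw [leaves_nil, Multiset.mem_singleton] at hp
      rw [hp]
    · exact absurd hp (Multiset.notMem_zero p)
    · rw [leaves_cons, Multiset.mem_bind] at hp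
      obtain ⟨x, -, hp⟩ := hp
      exact (List.reverse_cons ▸ List.prefix_append _ _).trans (ih hp)

theorem nodup_map_leaves (hA : A.Nodup) (hA3 : ∀ x ∈ A, x < 3) (f b : ℕ) (s : State)
    (u : List ℕ) : ((leaves A f b s u).map Prod.snd).Nodup := by
  induction f generalizing b s u with
  | zero => exact Multiset.nodup_zero
  | succ f ih =>
    obtain ⟨_ | ⟨_ | ⟨a, l⟩, st⟩, t⟩ := s
    · exact Multiset.nodup_singleton _
    · exact Multiset.nodup_zero
    · rw [leaves_cons, Multiset.map_bind, Multiset.nodup_bind]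
      refine ⟨fun x _ => ih _ _ _, Multiset.Nodup.pairwise (fun x _ y _ hxy =>
        Multiset.disjoint_left.2 ?_) (nodup_moves hA hA3 b l).1⟩
      simp only [Multiset.mem_map, not_exists, not_and]
      rintro _ ⟨p, hp, rfl⟩ q hq heq
      have hy := prefix_of_mem_leaves hq
      rw [heq] at hy
      have hle := List.prefix_of_prefix_length_le (prefix_of_mem_leaves hp) hy (by simp)
      exact hxy (List.head_eq_of_cons_eq (List.reverse_injective (hle.eq_of_length (by simp))))

attribute [irreducible] leaves

end Tally

/-! ### Exploration of planar maps -/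

section Push

variable {α : Type*}

theorem flatten_push (l : List α) (st : List (List α)) : (push l st).flatten = l ++ st.flatten := by
  cases l <;> rfl

theorem mem_of_mem_push {l m : List α} {st : List (List α)} (h : m ∈ push l st) :
    m = l ∨ m ∈ st := by
  cases l with
  | nil => exact Or.inr h
  | cons a l => exact List.mem_cons.1 h

theorem nil_notMem_push (l : List α) {st : List (List α)} (h : [] ∉ st) : [] ∉ push l st := by
  cases l with
  | nil => exact h
  | cons a l => exact fun hm => h ((List.mem_cons.1 hm).resolve_left nofun)

theorem map_push {β : Type*} (ι : α → β) (l : List α) (st : List (List α)) :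
    (push l st).map (List.map ι) = push (l.map ι) (st.map (List.map ι)) := by
  cases l <;> rfl

end Push

section Exploration

theorem subset_insert_insert {α : Type*} [DecidableEq α] (s : Finset α) (a b : α) :
    s ⊆ insert b (insert a s) :=
  (Finset.subset_insert a s).trans (Finset.subset_insert b _)

theorem insert_insert_val {α : Type*} [DecidableEq α] {s : Finset α} {a b : α} (ha : a ∉ s)
    (hb : b ∉ s) (hab : a ≠ b) : (insert b (insert a s)).val = b ::ₘ a ::ₘ s.val := by
  rw [Finset.insert_val_of_notMem, Finset.insert_val_of_notMem ha]
  rw [Finset.mem_insert, not_or]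
  exact ⟨hab.symm, hb⟩

open Equiv Equiv.Perm

variable {D : Type*} [DecidableEq D]

/-- The other darts of a vertex of degree 1 or 3, given one of its darts. -/
def otherDarts (ρ : Perm D) (b : D) : List D :=
  if ρ b = b then [] else [ρ b, ρ (ρ b)]

section OtherDarts

variable {ρ : Perm D} {b x : D}

theorem mem_cons_otherDarts : x ∈ b :: otherDarts ρ b ↔ x = b ∨ x = ρ b ∨ x = ρ (ρ b) := by
  unfold otherDarts
  split_ifs with hb
  · simp only [List.mem_singleton, hb, or_self]
  · simp only [List.mem_cons, List.not_mem_nil, or_false]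

theorem nodup_cons_otherDarts (hρ : ∀ x, ρ (ρ (ρ x)) = x) (b : D) :
    (b :: otherDarts ρ b).Nodup := by
  unfold otherDarts
  split_ifs with hb
  · exact List.nodup_singleton b
  · have hb' : ρ (ρ b) ≠ b := fun h => hb (by rw [← h, hρ, h])
    simp [Ne.symm hb, hb'.symm]

theorem apply_mem_cons_otherDarts (hρ : ∀ x, ρ (ρ (ρ x)) = x) (hx : x ∈ b :: otherDarts ρ b) :
    ρ x ∈ b :: otherDarts ρ b := by
  rw [mem_cons_otherDarts] at hx ⊢
  rcases hx with rfl | rfl | rfl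
  · exact Or.inr (Or.inl rfl)
  · exact Or.inr (Or.inr rfl)
  · exact Or.inl (hρ b)

theorem apply_apply_eq_of_mem_cons_otherDarts (hρ : ∀ x, ρ (ρ (ρ x)) = x)
    (hx : x ∈ b :: otherDarts ρ b) : b = x ∨ b = ρ x ∨ b = ρ (ρ x) := by
  rcases mem_cons_otherDarts.1 hx with rfl | rfl | rfl
  · exact Or.inl rfl
  · exact Or.inr (Or.inr (hρ b).symm)
  · exact Or.inr (Or.inl (hρ b).symm)

theorem orbitSetoid_of_mem_cons_otherDarts {τ : Perm D} (hx : x ∈ b :: otherDarts ρ b) :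
    orbitSetoid ρ τ b x := by
  rcases mem_cons_otherDarts.1 hx with rfl | rfl | rfl
  · exact (orbitSetoid ρ τ).refl _
  · exact orbitSetoid_left ρ τ b
  · exact (orbitSetoid ρ τ).trans (orbitSetoid_left ρ τ b) (orbitSetoid_left ρ τ _)

theorem isBoundary_cons_otherDarts (hρ : ∀ x, ρ (ρ (ρ x)) = x) {f : D → D} (s : Set D)
    (hf : ∀ x ∈ b :: otherDarts ρ b, f x = ρ x) : IsBoundary f s (b :: otherDarts ρ b) := by
  have step {x y : D} (hx : x ∈ b :: otherDarts ρ b) (hy : ρ x = y) : ReachesVia f s x y :=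
    hy ▸ hf x hx ▸ .single x
  have h₀ := step (List.mem_cons_self) rfl
  have h₁ := step (mem_cons_otherDarts.2 (Or.inr (Or.inl rfl))) rfl
  have h₂ := step (mem_cons_otherDarts.2 (Or.inr (Or.inr rfl))) (hρ b)
  unfold otherDarts
  split_ifs with hb
  · exact Cycle.chain_singleton _ b |>.2 (by rwa [hb] at h₀)
  · exact Cycle.chain_coe_cons _ _ _ |>.2 (by simp [h₀, h₁, h₂])

end OtherDarts

/-- Part of the map `(σ, ρ)` rooted at `d` has been explored: `vs` are the darts of the vertices
found so far, the edges at the darts in `C` have been processed, by means of the partial gluing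
`τ`, and `B` lists the other darts along the boundary components. -/
structure Explored (σ ρ τ : Perm D) (d : D) (C : Finset D) (vs : List D) (B : List (List D)) :
    Prop where
  nodup : vs.Nodup
  root : [d] <+: vs
  apply_mem : ∀ x ∈ vs, ρ x ∈ vs
  gluing : ∀ x, τ x = if x ∈ C then σ x else x
  connected : ∀ x ∈ vs, orbitSetoid ρ τ d x
  found : (vs : Multiset D) = C.val + (B.flatten : Multiset D)
  nil_notMem : [] ∉ B
  boundary : ∀ l ∈ B, IsBoundary (ρ * τ) C l

namespace Explored

variable {σ ρ τ : Perm D} {d a : D} {C : Finset D} {vs l l₁ l₂ : List D} {B st : List (List D)}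

theorem root_mem (h : Explored σ ρ τ d C vs B) : d ∈ vs :=
  h.root.subset List.mem_cons_self

theorem mem_iff (h : Explored σ ρ τ d C vs B) {x : D} : x ∈ vs ↔ x ∈ C ∨ x ∈ B.flatten := by
  rw [← Multiset.mem_coe, h.found, Multiset.mem_add, Finset.mem_val, Multiset.mem_coe]

theorem nodup_flatten (h : Explored σ ρ τ d C vs B) : B.flatten.Nodup :=
  Multiset.coe_nodup.1 (Multiset.nodup_add.1 (h.found ▸ Multiset.coe_nodup.2 h.nodup)).2.1

theorem notMem_of_mem_flatten (h : Explored σ ρ τ d C vs B) {x : D} (hx : x ∈ B.flatten) :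
    x ∉ C := fun hC =>
  Multiset.disjoint_left.1 (Multiset.nodup_add.1 (h.found ▸ Multiset.coe_nodup.2 h.nodup)).2.2
    hC hx

theorem notMem_of_mem (h : Explored σ ρ τ d C vs B) (hl : l ∈ B) {x : D} (hx : x ∈ l) : x ∉ C :=
  h.notMem_of_mem_flatten (List.mem_flatten_of_mem hl hx)

theorem apply_eq_self (h : Explored σ ρ τ d C vs B) {x : D} (hx : x ∉ C) : τ x = x := by
  rw [h.gluing, if_neg hx]

theorem isPartialGluing (h : Explored σ ρ τ d C vs B) : IsPartialGluing τ σ := fun x => by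
  rw [h.gluing]
  split_ifs
  · exact Or.inr rfl
  · exact Or.inl rfl

theorem close_halfEdge (h : Explored σ ρ τ d C vs ((a :: l) :: st)) (ha : σ a = a) :
    Explored σ ρ τ d (insert a C) vs (push l st) := by
  have haC : a ∉ C := h.notMem_of_mem List.mem_cons_self List.mem_cons_self
  have hsub : (C : Set D) ⊆ (insert a C : Finset D) :=
    Finset.coe_subset.2 (Finset.subset_insert a C)
  refine { h with
    gluing := fun x => ?_
    found := ?_
    nil_notMem := nil_notMem_push l fun hm => h.nil_notMem (List.mem_cons_of_mem _ hm)
    boundary := fun m hm => ?_ }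
  · by_cases hx : x = a
    · rw [hx, if_pos (Finset.mem_insert_self a C), h.apply_eq_self haC, ha]
    · simp only [h.gluing, Finset.mem_insert, hx, false_or]
  · rw [h.found, flatten_push, Finset.insert_val_of_notMem haC, List.flatten_cons, List.cons_append,
      ← Multiset.cons_coe, Multiset.add_cons, Multiset.cons_add]
  · rcases mem_of_mem_push hm with rfl | hm
    · exact ((h.boundary _ List.mem_cons_self).congr hsub (fun _ _ => rfl) fun _ _ => rfl).of_cons
        (Finset.mem_insert_self a C)
    · exact (h.boundary _ (List.mem_cons_of_mem _ hm)).congr hsub (fun _ _ => rfl) fun _ _ => rfl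

theorem apply_notMem (h : Explored σ ρ τ d C vs B) (hσ : ∀ x, σ (σ x) = x) {x : D} (hx : x ∉ C) :
    σ x ∉ C := by
  intro hσx
  have hfix := h.isPartialGluing.apply_eq_self hσ (h.apply_eq_self hx)
  rw [h.gluing, if_pos hσx, hσ] at hfix
  exact hx (hfix ▸ hσx)

theorem gluing_mul_swap (h : Explored σ ρ τ d C vs B) (hσ : ∀ x, σ (σ x) = x) (ha : a ∉ C) (x : D) :
    (τ * swap a (σ a)) x = if x ∈ insert (σ a) (insert a C) then σ x else x := by
  rw [h.isPartialGluing.mul_swap_apply hσ (h.apply_eq_self ha), h.gluing]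
  grind

theorem orbitSetoid_le_mul_swap (h : Explored σ ρ τ d C vs B) (hσ : ∀ x, σ (σ x) = x)
    (ha : a ∉ C) : orbitSetoid ρ τ ≤ orbitSetoid ρ (τ * swap a (σ a)) := by
  refine orbitSetoid_le (orbitSetoid_left _ _) fun x => ?_
  by_cases hx : x ∈ C
  · have hτ : (τ * swap a (σ a)) x = τ x := by
      rw [h.gluing_mul_swap hσ ha, h.gluing, if_pos hx, if_pos]
      exact Finset.mem_insert_of_mem (Finset.mem_insert_of_mem hx)
    exact hτ ▸ orbitSetoid_right ρ _ x
  · rw [h.apply_eq_self hx]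

theorem mul_swap_apply_of_mem (ha : a ∉ l) (hb : σ a ∉ l) :
    ∀ x ∈ l, (ρ * (τ * swap a (σ a))) x = (ρ * τ) x := fun x hx => by
  rw [Perm.mul_apply, Perm.mul_apply, Perm.mul_apply,
    swap_apply_of_ne_of_ne (ne_of_mem_of_not_mem hx ha) (ne_of_mem_of_not_mem hx hb)]

theorem mul_swap_apply_of_mem_closed (ha : a ∉ C) (hb : σ a ∉ C) :
    ∀ x ∈ (C : Set D), (ρ * (τ * swap a (σ a))) x = (ρ * τ) x := fun x hx =>
  mul_swap_apply_of_mem (l := C.toList) (by rwa [Finset.mem_toList]) (by rwa [Finset.mem_toList])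
    x (Finset.mem_toList.2 hx)

theorem boundary_mul_swap (h : IsBoundary (ρ * τ) C l) (haC : a ∉ C) (hbC : σ a ∉ C) (ha : a ∉ l)
    (hb : σ a ∉ l) :
    IsBoundary (ρ * (τ * swap a (σ a)) : Perm D) (insert (σ a) (insert a C) : Finset D) l :=
  h.congr (Finset.coe_subset.2 (subset_insert_insert C a (σ a)))
    (mul_swap_apply_of_mem_closed haC hbC) (mul_swap_apply_of_mem ha hb)

theorem boundary_tail_mul_swap (h : Explored σ ρ τ d C vs (l :: st)) (haC : a ∉ C) (hbC : σ a ∉ C)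
    (ha : a ∉ st.flatten) (hb : σ a ∉ st.flatten) {m : List D} (hm : m ∈ st) :
    IsBoundary (ρ * (τ * swap a (σ a)) : Perm D) (insert (σ a) (insert a C) : Finset D) m :=
  boundary_mul_swap (h.boundary m (List.mem_cons_of_mem l hm)) haC hbC
    (fun hm' => ha (List.mem_flatten_of_mem hm hm'))
    fun hm' => hb (List.mem_flatten_of_mem hm hm')

theorem split (h : Explored σ ρ τ d C vs ((a :: (l₁ ++ σ a :: l₂)) :: st))
    (hσ : ∀ x, σ (σ x) = x) : Explored σ ρ (τ * swap a (σ a)) d (insert (σ a) (insert a C)) vs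
      (push l₁ (push l₂ st)) := by
  have haC : a ∉ C := h.notMem_of_mem List.mem_cons_self List.mem_cons_self
  have hbC : σ a ∉ C := h.apply_notMem hσ haC
  have hperm : List.Perm ((a :: (l₁ ++ σ a :: l₂)) :: st).flatten
      (a :: σ a :: (l₁ ++ l₂ ++ st.flatten)) := by
    rw [List.flatten_cons, List.append_assoc l₁ l₂, ← List.append_assoc l₁]
    exact (List.perm_middle.append_right _).cons a
  have hnd := hperm.nodup_iff.1 h.nodup_flatten
  simp only [List.nodup_cons, List.mem_cons, List.mem_append, not_or] at hnd
  obtain ⟨⟨hne, ⟨ha₁, ha₂⟩, hast⟩, ⟨⟨hb₁, hb₂⟩, hbst⟩, -⟩ := hnd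
  obtain ⟨h₁, h₂⟩ := (h.boundary _ List.mem_cons_self).split
    (Finset.coe_subset.2 (subset_insert_insert C a (σ a)))
    (mul_swap_apply_of_mem_closed haC hbC)
    (mul_swap_apply_of_mem (List.not_mem_append ha₁ ha₂) (List.not_mem_append hb₁ hb₂))
    (Finset.mem_insert_of_mem (Finset.mem_insert_self a C)) (Finset.mem_insert_self _ _)
    (by simp) (by simp)
  exact {
    nodup := h.nodup
    root := h.root
    apply_mem := h.apply_mem
    gluing := h.gluing_mul_swap hσ haC
    connected := fun x hx => h.orbitSetoid_le_mul_swap hσ haC (h.connected x hx)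
    found := by
      rw [h.found, Multiset.coe_eq_coe.2 hperm, flatten_push, flatten_push, ← List.append_assoc,
        insert_insert_val haC hbC hne, ← Multiset.cons_coe, ← Multiset.cons_coe, Multiset.add_cons,
        Multiset.add_cons, Multiset.cons_add, Multiset.cons_add, Multiset.cons_swap]
    nil_notMem := nil_notMem_push _ (nil_notMem_push _ fun hm =>
      h.nil_notMem (List.mem_cons_of_mem _ hm))
    boundary := fun m hm => by
      rcases mem_of_mem_push hm with rfl | hm
      · exact h₁
      rcases mem_of_mem_push hm with rfl | hm
      · exact h₂
      exact h.boundary_tail_mul_swap haC hbC hast hbst hm }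

theorem notMem_of_mem_cons_otherDarts (h : Explored σ ρ τ d C vs B) (hρ : ∀ x, ρ (ρ (ρ x)) = x)
    {b x : D} (hb : b ∉ vs) (hx : x ∈ b :: otherDarts ρ b) : x ∉ vs := fun hxv => by
  rcases apply_apply_eq_of_mem_cons_otherDarts hρ hx with h' | h' | h' <;> rw [h'] at hb
  exacts [hb hxv, hb (h.apply_mem x hxv), hb (h.apply_mem _ (h.apply_mem x hxv))]

theorem boundary_join (h : Explored σ ρ τ d C vs ((a :: l) :: st)) (hσ : ∀ x, σ (σ x) = x)
    (hρ : ∀ x, ρ (ρ (ρ x)) = x) (hb : σ a ∉ vs) :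
    IsBoundary (ρ * (τ * swap a (σ a)) : Perm D) (insert (σ a) (insert a C) : Finset D)
      (otherDarts ρ (σ a) ++ l) := by
  have haB : a ∈ ((a :: l) :: st).flatten := List.mem_cons_self
  have haC : a ∉ C := h.notMem_of_mem_flatten haB
  have hnew (x) (hx : x ∈ σ a :: otherDarts ρ (σ a)) : x ∉ vs :=
    h.notMem_of_mem_cons_otherDarts hρ hb hx
  have hal : a ∉ l := fun hx =>
    (List.nodup_cons.1 h.nodup_flatten).1 (List.mem_append_left st.flatten hx)
  have hbl : σ a ∉ l := fun hx =>
    hb (h.mem_iff.2 (Or.inr (List.mem_cons_of_mem a (List.mem_append_left st.flatten hx))))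
  exact (h.boundary _ List.mem_cons_self).join
    (isBoundary_cons_otherDarts hρ C fun x hx => by
      rw [Perm.mul_apply, h.apply_eq_self fun hxC => hnew x hx (h.mem_iff.2 (Or.inl hxC))])
    (Finset.coe_subset.2 (subset_insert_insert C a (σ a)))
    (mul_swap_apply_of_mem_closed haC (h.apply_notMem hσ haC))
    (mul_swap_apply_of_mem
      (List.not_mem_append hal fun hx =>
        hnew a (List.mem_cons_of_mem _ hx) (h.mem_iff.2 (Or.inr haB)))
      (List.not_mem_append hbl (List.nodup_cons.1 (nodup_cons_otherDarts hρ (σ a))).1))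
    (Finset.mem_insert_of_mem (Finset.mem_insert_self a C)) (Finset.mem_insert_self _ _)
    (by simp) (by simp)

theorem join (h : Explored σ ρ τ d C vs ((a :: l) :: st)) (hσ : ∀ x, σ (σ x) = x)
    (hρ : ∀ x, ρ (ρ (ρ x)) = x) (hb : σ a ∉ vs) :
    Explored σ ρ (τ * swap a (σ a)) d (insert (σ a) (insert a C))
      (vs ++ σ a :: otherDarts ρ (σ a)) (push (otherDarts ρ (σ a) ++ l) st) := by
  have haC : a ∉ C := h.notMem_of_mem List.mem_cons_self List.mem_cons_self
  have hbC : σ a ∉ C := h.apply_notMem hσ haC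
  have ha : a ∈ vs := h.mem_iff.2 (Or.inr List.mem_cons_self)
  have hne : a ≠ σ a := ne_of_mem_of_not_mem ha hb
  have hast : a ∉ st.flatten := fun hx =>
    (List.nodup_cons.1 h.nodup_flatten).1 (List.mem_append_right l hx)
  have hbst : σ a ∉ st.flatten := fun hx =>
    hb (h.mem_iff.2 (Or.inr (List.mem_cons_of_mem a (List.mem_append_right l hx))))
  have hle := h.orbitSetoid_le_mul_swap hσ haC
  exact {
    nodup := h.nodup.append (nodup_cons_otherDarts hρ (σ a)) fun x hx hx' =>
      h.notMem_of_mem_cons_otherDarts hρ hb hx' hx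
    root := h.root.trans (List.prefix_append _ _)
    apply_mem := fun x hx => List.mem_append.2 <| (List.mem_append.1 hx).imp (h.apply_mem x)
      (apply_mem_cons_otherDarts hρ)
    gluing := h.gluing_mul_swap hσ haC
    connected := fun x hx => by
      rcases List.mem_append.1 hx with hx | hx
      · exact hle (h.connected x hx)
      · refine Setoid.trans' _ (hle (h.connected a ha)) (Setoid.trans' _ ?_
          (orbitSetoid_of_mem_cons_otherDarts hx))
        simpa [h.apply_eq_self hbC] using orbitSetoid_right ρ (τ * swap a (σ a)) a
    found := by
      rw [← Multiset.coe_add, h.found, flatten_push, insert_insert_val haC hbC hne]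
      simp only [List.flatten_cons, ← Multiset.cons_coe, ← Multiset.coe_add,
        ← Multiset.singleton_add]
      abel
    nil_notMem := nil_notMem_push _ fun hm => h.nil_notMem (List.mem_cons_of_mem _ hm)
    boundary := fun m hm => by
      rcases mem_of_mem_push hm with rfl | hm
      · exact h.boundary_join hσ hρ hb
      exact h.boundary_tail_mul_swap haC hbC hast hbst hm }

theorem mem_of_mem [Fintype D] (h : Explored σ ρ τ d C vs ((a :: l) :: st))
    (hσ : ∀ x, σ (σ x) = x) (planar : gluingDefect ρ σ ≤ gluingDefect ρ 1) (ha : σ a ≠ a)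
    (hb : σ a ∈ vs) : σ a ∈ l := by
  have haB : a ∈ ((a :: l) :: st).flatten :=
    List.mem_flatten_of_mem List.mem_cons_self List.mem_cons_self
  have haC : a ∉ C := h.notMem_of_mem_flatten haB
  have horb : orbitSetoid ρ τ a (σ a) := Setoid.trans' _
    (Setoid.symm' _ (h.connected a (h.mem_iff.2 (Or.inr haB)))) (h.connected _ hb)
  obtain ⟨k, hk⟩ := (h.isPartialGluing.sameCycle hσ planar (h.apply_eq_self haC) ha
    horb).exists_nat_pow_eq
  rw [← iterate_eq_pow] at hk
  have hmem := (h.boundary _ List.mem_cons_self).mem_of_iterate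
    (fun x hx => h.notMem_of_mem List.mem_cons_self hx) List.mem_cons_self k
    (hk ▸ h.apply_notMem hσ haC)
  exact (List.mem_cons.1 (hk ▸ hmem)).resolve_left ha

theorem closed_eq_univ [Fintype D] (h : Explored σ ρ τ d C vs []) (hσ : ∀ x, σ (σ x) = x)
    (hρ : ∀ x, ρ (ρ (ρ x)) = x) (conn : ∀ x, orbitSetoid ρ σ d x) : C = Finset.univ := by
  have hvs (x : D) : x ∈ vs ↔ x ∈ C := by
    rw [h.mem_iff, List.flatten_nil, or_iff_left List.not_mem_nil]
  have hρC (x : D) (hx : x ∈ C) : ρ x ∈ C := (hvs _).1 (h.apply_mem x ((hvs x).2 hx))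
  have hle : orbitSetoid ρ σ ≤ Setoid.ker (· ∈ C) :=
    orbitSetoid_le (fun x => propext ⟨hρC x, fun hx => hρ x ▸ hρC _ (hρC _ hx)⟩)
      fun x => propext ⟨fun hx => not_imp_not.1 (h.apply_notMem hσ) ((hσ x).symm ▸ hx),
        not_imp_not.1 (h.apply_notMem hσ)⟩
  exact Finset.eq_univ_iff_forall.2 fun x =>
    (iff_of_eq (Setoid.ker_def.1 (hle (conn x)))).1 ((hvs d).1 h.root_mem)

end Explored

end Exploration

section Numbering

variable {D : Type*} [DecidableEq D]

theorem idxOf_append_getElem {vs ks : List D} (h : (vs ++ ks).Nodup) {i : ℕ}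
    (hi : i < ks.length) : (vs ++ ks).idxOf ks[i] = vs.length + i := by
  have := h.idxOf_getElem (vs.length + i) (by rw [List.length_append]; omega)
  rwa [List.getElem_append_right (Nat.le_add_right _ _),
    show ks[vs.length + i - vs.length] = ks[i] by congr 1; omega] at this

theorem idxOf_append_cons {vs : List D} {b : D} (hb : b ∉ vs) (ks : List D) :
    (vs ++ b :: ks).idxOf b = vs.length := by
  rw [List.idxOf_append_of_notMem hb, List.idxOf_cons_self, Nat.add_zero]

/-- The digits of `s` are the values of `π` on `S`, in the numbering of points by their positions
in `vs`, and the other digits are zero. -/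
structure Records (π : D → D) (S : Set D) (vs : List D) (s : ℕ) : Prop where
  digit_eq : ∀ x ∈ S, digit s (vs.idxOf x) = vs.idxOf (π x)
  digit_eq_zero : ∀ i, (∀ x ∈ S, vs.idxOf x ≠ i) → digit s i = 0

namespace Records

variable {π : D → D} {S : Set D} {vs : List D} {s : ℕ} {a : D}

theorem zero (π : D → D) (vs : List D) : Records π ∅ vs 0 where
  digit_eq := fun x hx => hx.elim
  digit_eq_zero := fun i _ => by
    change 0 / 32 ^ i % 32 = 0
    rw [Nat.zero_div]

theorem append (h : Records π S vs s) (hS : ∀ x ∈ S, x ∈ vs) (hπ : ∀ x ∈ S, π x ∈ vs)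
    (ks : List D) : Records π S (vs ++ ks) s where
  digit_eq := fun x hx => by
    rw [List.idxOf_append_of_mem (hS x hx), List.idxOf_append_of_mem (hπ x hx), h.digit_eq x hx]
  digit_eq_zero := fun i hi => h.digit_eq_zero i fun x hx =>
    List.idxOf_append_of_mem (l₂ := ks) (hS x hx) ▸ hi x hx

theorem put (h : Records π S vs s) (hS : ∀ x ∈ S, x ∈ vs) (ha : a ∉ S) (hav : a ∈ vs)
    (hπa : π a ∈ vs) (hvs : vs.length ≤ 32) :
    Records π (insert a S) vs (put s (vs.idxOf a) (vs.idxOf (π a))) := by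
  have hput := digit_put (h.digit_eq_zero (vs.idxOf a) fun x hx hxa =>
    ha ((List.idxOf_inj (hS x hx)).1 hxa ▸ hx)) ((List.idxOf_lt_length_of_mem hπa).trans_le hvs)
  constructor
  · intro x hx
    rw [hput]
    split_ifs with hxa
    · rw [(List.idxOf_inj hav).1 hxa.symm]
    · exact h.digit_eq x (hx.resolve_left fun hxa' => hxa (hxa' ▸ rfl))
  · intro i hi
    rw [hput, if_neg (hi a (Set.mem_insert a S)).symm]
    exact h.digit_eq_zero i fun x hx => hi x (Set.mem_insert_of_mem a hx)

theorem glue {σ : D → D} (h : Records σ S vs s) (hS : ∀ x ∈ S, x ∈ vs) (hσ : ∀ x, σ (σ x) = x)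
    (ha : a ∉ S) (hb : σ a ∉ S) (hne : σ a ≠ a) (hav : a ∈ vs) (hbv : σ a ∈ vs)
    (hvs : vs.length ≤ 32) :
    Records σ (insert (σ a) (insert a S)) vs (glue s (vs.idxOf a) (vs.idxOf (σ a))) := by
  have h' := (h.put hS ha hav hbv hvs).put (a := σ a)
    (fun x hx => hx.elim (fun hx => hx ▸ hav) (hS x)) (fun hb' => hb'.elim hne hb) hbv
    ((hσ a).symm ▸ hav) hvs
  rwa [hσ] at h'

theorem vertex_one {ρ : D → D} {b : D} (h : Records ρ {x | x ∈ vs} vs s)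
    (hvs : ∀ x ∈ vs, ρ x ∈ vs) (hb : b ∉ vs) (hρb : ρ b = b) (hlen : (vs ++ [b]).length ≤ 32) :
    Records ρ {x | x ∈ vs ++ [b]} (vs ++ [b]) (ModularMonodromy.put s vs.length vs.length) := by
  have hset : {x | x ∈ vs ++ [b]} = insert b {x | x ∈ vs} := by ext x; simp [or_comm]
  have := (h.append (fun _ hx => hx) hvs [b]).put (fun _ hx => List.mem_append_left _ hx) hb
    (by simp) (by simp [hρb]) hlen
  rwa [hρb, idxOf_append_cons hb, ← hset] at this

theorem vertex_three {ρ : D → D} {b : D} (h : Records ρ {x | x ∈ vs} vs s)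
    (hvs : ∀ x ∈ vs, ρ x ∈ vs) (hρb : ρ (ρ (ρ b)) = b)
    (hnd : (vs ++ [b, ρ b, ρ (ρ b)]).Nodup) (hlen : (vs ++ [b, ρ b, ρ (ρ b)]).length ≤ 32) :
    Records ρ {x | x ∈ vs ++ [b, ρ b, ρ (ρ b)]} (vs ++ [b, ρ b, ρ (ρ b)])
      (ModularMonodromy.put (ModularMonodromy.put
        (ModularMonodromy.put s vs.length (vs.length + 1)) (vs.length + 1) (vs.length + 2))
        (vs.length + 2) vs.length) := by
  have hset : {x | x ∈ vs ++ [b, ρ b, ρ (ρ b)]} =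
      insert (ρ (ρ b)) (insert (ρ b) (insert b {x | x ∈ vs})) := by
    ext x
    simp only [List.mem_append, List.mem_cons, List.not_mem_nil, or_false, Set.mem_ofPred_eq,
      Set.mem_insert_iff]
    tauto
  have e₀ : (vs ++ [b, ρ b, ρ (ρ b)]).idxOf b = vs.length :=
    idxOf_append_getElem hnd (i := 0) (by simp)
  have e₁ : (vs ++ [b, ρ b, ρ (ρ b)]).idxOf (ρ b) = vs.length + 1 :=
    idxOf_append_getElem hnd (i := 1) (by simp)
  have e₂ : (vs ++ [b, ρ b, ρ (ρ b)]).idxOf (ρ (ρ b)) = vs.length + 2 :=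
    idxOf_append_getElem hnd (i := 2) (by simp)
  simp only [List.nodup_append, List.nodup_cons, List.mem_cons, List.not_mem_nil, not_or] at hnd
  obtain ⟨-, ⟨⟨hb₀₁, hb₀₂, -⟩, ⟨hb₁₂, -⟩, -⟩, hnew⟩ := hnd
  have h₀ : b ∉ vs := fun hx => hnew b hx b (Or.inl rfl) rfl
  have h₁ : ρ b ∉ vs := fun hx => hnew _ hx _ (Or.inr (Or.inl rfl)) rfl
  have h₂ : ρ (ρ b) ∉ vs := fun hx => hnew _ hx _ (Or.inr (Or.inr (Or.inl rfl))) rfl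
  have hvs' (x) (hx : x ∈ vs) : x ∈ vs ++ [b, ρ b, ρ (ρ b)] := List.mem_append_left _ hx
  have m₀ : b ∈ vs ++ [b, ρ b, ρ (ρ b)] := by simp
  have m₁ : ρ b ∈ vs ++ [b, ρ b, ρ (ρ b)] := by simp
  have m₂ : ρ (ρ b) ∈ vs ++ [b, ρ b, ρ (ρ b)] := by simp
  have hr₀ := (h.append (fun _ hx => hx) hvs [b, ρ b, ρ (ρ b)]).put hvs' h₀ m₀ m₁ hlen
  have hr₁ := hr₀.put (Set.insert_subset m₀ hvs') (by simp [h₁, Ne.symm hb₀₁]) m₁ m₂ hlen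
  have hr₂ := hr₁.put (Set.insert_subset m₁ (Set.insert_subset m₀ hvs'))
    (by simp [h₂, Ne.symm hb₀₂, Ne.symm hb₁₂]) m₂ (hρb.symm ▸ m₀) hlen
  rwa [hρb, e₀, e₁, e₂, ← hset] at hr₂

end Records

/-- The state `s` describes the front `B` of an exploration with processed darts `C`, in the
numbering of darts by their positions in the list `vs` of darts found. -/
structure Encodes (σ ρ : D → D) (C : Finset D) (vs : List D) (B : List (List D)) (s : State) :
    Prop where
  size : s.table.size = vs.length
  blocks : s.blocks = B.map (List.map vs.idxOf)
  σ_records : Records σ C vs s.table.σ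
  ρ_records : Records ρ {x | x ∈ vs} vs s.table.ρ

end Numbering

section Encodes

open Equiv Equiv.Perm

variable {D : Type*} [DecidableEq D] {σ ρ τ : Perm D} {d a : D} {C : Finset D}
  {vs l l₁ l₂ : List D} {st : List (List D)} {t : Table}

namespace Encodes

theorem close_halfEdge
    (he : Encodes σ ρ C vs ((a :: l) :: st) ⟨((a :: l) :: st).map (List.map vs.idxOf), t⟩)
    (h : Explored σ ρ τ d C vs ((a :: l) :: st)) (hvs : vs.length ≤ 32) (ha : σ a = a) :
    Encodes σ ρ (insert a C) vs (push l st)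
      (next 0 (vs.idxOf a) (l.map vs.idxOf) (st.map (List.map vs.idxOf)) t) where
  size := he.size
  blocks := (map_push _ _ _).symm
  σ_records := by
    have haB : a ∈ ((a :: l) :: st).flatten := List.mem_cons_self
    have hav := h.mem_iff.2 (Or.inr haB)
    have := he.σ_records.put (fun x hx => h.mem_iff.2 (Or.inl hx)) (h.notMem_of_mem_flatten haB)
      hav (ha.symm ▸ hav) hvs
    rwa [ha, ← Finset.coe_insert] at this
  ρ_records := he.ρ_records

theorem split
    (he : Encodes σ ρ C vs ((a :: (l₁ ++ σ a :: l₂)) :: st)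
      ⟨((a :: (l₁ ++ σ a :: l₂)) :: st).map (List.map vs.idxOf), t⟩)
    (h : Explored σ ρ τ d C vs ((a :: (l₁ ++ σ a :: l₂)) :: st)) (hσ : ∀ x, σ (σ x) = x)
    (hvs : vs.length ≤ 32) (ha : σ a ≠ a) :
    Encodes σ ρ (insert (σ a) (insert a C)) vs (push l₁ (push l₂ st))
      (next (l₁.length + 3) (vs.idxOf a) ((l₁ ++ σ a :: l₂).map vs.idxOf)
        (st.map (List.map vs.idxOf)) t) where
  size := he.size
  blocks := by
    have htake := List.take_left' (l₂ := (σ a :: l₂).map vs.idxOf)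
      (List.length_map (as := l₁) vs.idxOf)
    have hdrop : ((l₁ ++ σ a :: l₂).map vs.idxOf).drop (l₁.length + 1) = l₂.map vs.idxOf := by
      rw [List.append_cons, List.map_append, List.drop_left' (by simp)]
    rw [← List.map_append] at htake
    rw [map_push, map_push, next, htake, hdrop]
  σ_records := by
    have haB : a ∈ ((a :: (l₁ ++ σ a :: l₂)) :: st).flatten := List.mem_cons_self
    have haC := h.notMem_of_mem_flatten haB
    have hbv : σ a ∈ vs := h.mem_iff.2 (Or.inr (by simp))
    have := he.σ_records.glue (fun x hx => h.mem_iff.2 (Or.inl hx)) hσ haC (h.apply_notMem hσ haC)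
      ha (h.mem_iff.2 (Or.inr haB)) hbv hvs
    simpa [next] using this
  ρ_records := he.ρ_records

theorem σ_records_join {ks : List D} {B : List (List D)} {s : State} (he : Encodes σ ρ C vs B s)
    (h : Explored σ ρ τ d C vs B) (hσ : ∀ x, σ (σ x) = x) (ha : a ∈ B.flatten)
    (hvs : (vs ++ σ a :: ks).length ≤ 32) (hb : σ a ∉ vs) :
    Records σ (insert (σ a) (insert a C) : Finset D) (vs ++ σ a :: ks)
      (glue s.table.σ (vs.idxOf a) s.table.size) := by
  have haC := h.notMem_of_mem_flatten ha
  have hav : a ∈ vs := h.mem_iff.2 (Or.inr ha)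
  have hCvs (x) (hx : x ∈ (C : Set D)) : x ∈ vs := h.mem_iff.2 (Or.inl hx)
  have hσC (x) (hx : x ∈ (C : Set D)) : σ x ∈ vs :=
    hCvs _ (not_imp_not.1 (h.apply_notMem hσ) ((hσ x).symm ▸ hx))
  have := (he.σ_records.append hCvs hσC (σ a :: ks)).glue
    (fun x hx => List.mem_append_left _ (hCvs x hx)) hσ haC (h.apply_notMem hσ haC)
    (ne_of_mem_of_not_mem hav hb).symm (List.mem_append_left _ hav) (by simp) hvs
  rwa [List.idxOf_append_of_mem hav, idxOf_append_cons hb, ← he.size, ← Finset.coe_insert,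
    ← Finset.coe_insert] at this

theorem blocks_append {B : List (List D)} {s : State} (he : Encodes σ ρ C vs B s)
    (h : Explored σ ρ τ d C vs B) (ks : List D) :
    s.blocks = B.map (List.map (vs ++ ks).idxOf) := by
  rw [he.blocks]
  refine List.map_congr_left fun l hl => List.map_congr_left fun x hx => ?_
  rw [List.idxOf_append_of_mem (h.mem_iff.2 (Or.inr (List.mem_flatten_of_mem hl hx)))]

theorem join_one
    (he : Encodes σ ρ C vs ((a :: l) :: st) ⟨((a :: l) :: st).map (List.map vs.idxOf), t⟩)
    (h : Explored σ ρ τ d C vs ((a :: l) :: st)) (hσ : ∀ x, σ (σ x) = x)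
    (hvs : (vs ++ [σ a]).length ≤ 32) (hb : σ a ∉ vs) (hρb : ρ (σ a) = σ a) :
    Encodes σ ρ (insert (σ a) (insert a C)) (vs ++ [σ a]) (push l st)
      (next 1 (vs.idxOf a) (l.map vs.idxOf) (st.map (List.map vs.idxOf)) t) where
  size := by rw [List.length_append, ← he.size]; rfl
  blocks := by
    have hl := he.blocks_append h [σ a]
    simp only [List.map_cons, List.cons.injEq] at hl
    rw [next, map_push, hl.1.2, hl.2]
  σ_records := he.σ_records_join h hσ List.mem_cons_self hvs hb
  ρ_records := by
    have hs : t.size = vs.length := he.size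
    have := he.ρ_records.vertex_one h.apply_mem hb hρb hvs
    rwa [← hs] at this

theorem join_three
    (he : Encodes σ ρ C vs ((a :: l) :: st) ⟨((a :: l) :: st).map (List.map vs.idxOf), t⟩)
    (h : Explored σ ρ τ d C vs ((a :: l) :: st)) (hσ : ∀ x, σ (σ x) = x)
    (hρ : ∀ x, ρ (ρ (ρ x)) = x)
    (hvs : (vs ++ [σ a, ρ (σ a), ρ (ρ (σ a))]).length ≤ 32)
    (hnd : (vs ++ [σ a, ρ (σ a), ρ (ρ (σ a))]).Nodup) :
    Encodes σ ρ (insert (σ a) (insert a C)) (vs ++ [σ a, ρ (σ a), ρ (ρ (σ a))])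
      ((ρ (σ a) :: ρ (ρ (σ a)) :: l) :: st)
      (next 2 (vs.idxOf a) (l.map vs.idxOf) (st.map (List.map vs.idxOf)) t) where
  size := by rw [List.length_append, ← he.size]; rfl
  blocks := by
    have hs : t.size = vs.length := he.size
    have e₁ : (vs ++ [σ a, ρ (σ a), ρ (ρ (σ a))]).idxOf (ρ (σ a)) = vs.length + 1 :=
      idxOf_append_getElem hnd (i := 1) (by simp)
    have e₂ : (vs ++ [σ a, ρ (σ a), ρ (ρ (σ a))]).idxOf (ρ (ρ (σ a))) = vs.length + 2 :=
      idxOf_append_getElem hnd (i := 2) (by simp)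
    have hl := he.blocks_append h [σ a, ρ (σ a), ρ (ρ (σ a))]
    simp only [List.map_cons, List.cons.injEq] at hl
    rw [next, hl.1.2, hl.2, hs, ← e₁, ← e₂]
    rfl
  σ_records := he.σ_records_join h hσ List.mem_cons_self hvs fun hb =>
    (List.nodup_append.1 hnd).2.2 _ hb _ List.mem_cons_self rfl
  ρ_records := by
    have hs : t.size = vs.length := he.size
    have := he.ρ_records.vertex_three h.apply_mem (hρ (σ a)) hnd hvs
    rwa [← hs] at this

end Encodes

end Encodes

section Leaves

open Equiv Equiv.Perm

variable {D : Type*} [DecidableEq D] {σ ρ : Perm D} {d a : D} {C : Finset D}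
  {vs l : List D} {st : List (List D)} {A : List ℕ} {b : ℕ} {t : Table}

/-- The contribution to `mapSize σ ρ` of the darts in `vs` and of the half-edges in `C`. -/
def partialSize (σ ρ : Perm D) (vs : List D) (C : Finset D) : ℕ :=
  (∑ x ∈ C, if σ x = x then 3 else 0) + (vs.map fun x => 1 + if ρ x = x then 2 else 0).sum

theorem partialSize_mono {C' : Finset D} (h : C ⊆ C') :
    partialSize σ ρ vs C ≤ partialSize σ ρ vs C' :=
  Nat.add_le_add_right (Finset.sum_le_sum_of_subset h) _

theorem partialSize_insert (ha : a ∉ C) (hσ : σ a = a) :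
    partialSize σ ρ vs (insert a C) = partialSize σ ρ vs C + 3 := by
  rw [partialSize, partialSize, Finset.sum_insert ha, if_pos hσ]
  omega

theorem partialSize_append_le (x : D) :
    partialSize σ ρ vs C + 3 ≤ partialSize σ ρ (vs ++ x :: otherDarts ρ x) C := by
  rw [partialSize, partialSize, List.map_append, List.sum_append, add_assoc]
  gcongr
  unfold otherDarts
  split_ifs with hx <;> simp [hx]

/-- The size of a map, which for the map of a subgroup `Γ` of the modular group is `tfIdx Γ`. -/
noncomputable def mapSize {D : Type*} (σ ρ : Perm D) : ℕ :=
  Nat.card D + 3 * Nat.card {x // σ x = x} + 2 * Nat.card {x // ρ x = x}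

theorem partialSize_le [Finite D] (σ ρ : Perm D) (hvs : vs.Nodup) (C : Finset D) :
    partialSize σ ρ vs C ≤ mapSize σ ρ := by
  have := Fintype.ofFinite D
  have h₁ : (∑ x ∈ C, if σ x = x then 3 else 0) ≤ 3 * Fintype.card {x // σ x = x} := by
    rw [Fintype.card_subtype, Finset.card_filter, Finset.mul_sum]
    simp only [mul_ite, mul_one, mul_zero]
    exact Finset.sum_le_univ_sum_of_nonneg fun _ => Nat.zero_le _
  have h₂ : (vs.map fun x => 1 + if ρ x = x then 2 else 0).sum ≤
      Fintype.card D + 2 * Fintype.card {x // ρ x = x} := by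
    rw [← List.sum_toFinset _ hvs, Fintype.card_subtype, Finset.card_filter, Finset.mul_sum,
      Fintype.card_eq_sum_ones, ← Finset.sum_add_distrib]
    simp only [mul_ite, mul_one, mul_zero]
    exact Finset.sum_le_univ_sum_of_nonneg fun _ => Nat.zero_le _
  simp only [partialSize, mapSize, Nat.card_eq_fintype_card]
  omega

/-- `t` is the table of the map `(σ, ρ)`, the darts being numbered by `e` with `0` for the root. -/
structure IsTableOf (σ ρ : Perm D) (d : D) (t : Table) (e : D → ℕ) : Prop where
  injective : Function.Injective e
  root : e d = 0
  lt_size : ∀ x, e x < t.size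
  size : t.size = Nat.card D
  digit_σ : ∀ x, digit t.σ (e x) = e (σ x)
  digit_ρ : ∀ x, digit t.ρ (e x) = e (ρ x)

/-- The state `s` describes an exploration of the map `(σ, ρ)` with front `B`, and the remaining
budget `b` suffices for the rest of the map. -/
structure Reaches (σ ρ : Perm D) (d : D) (C : Finset D) (vs : List D) (B : List (List D)) (b : ℕ)
    (s : State) : Prop where
  explored : ∃ τ, Explored σ ρ τ d C vs B
  encodes : Encodes σ ρ C vs B s
  budget : mapSize σ ρ ≤ 3 * b + partialSize σ ρ vs C

namespace Reaches

theorem isTableOf [Finite D] (h : Reaches σ ρ d C vs [] b ⟨[], t⟩) (hσ : ∀ x, σ (σ x) = x)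
    (hρ : ∀ x, ρ (ρ (ρ x)) = x) (conn : ∀ x, orbitSetoid ρ σ d x) :
    IsTableOf σ ρ d t vs.idxOf := by
  have := Fintype.ofFinite D
  obtain ⟨τ, hE⟩ := h.explored
  have hC := hE.closed_eq_univ hσ hρ conn
  have hmem (x : D) : x ∈ vs := hE.mem_iff.2 (Or.inl (hC ▸ Finset.mem_univ x))
  have hsize : t.size = vs.length := h.encodes.size
  exact {
    injective := fun x y hxy => (List.idxOf_inj (hmem x)).1 hxy
    root := by
      obtain ⟨ks, rfl⟩ := hE.root
      exact List.idxOf_cons_self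
    lt_size := fun x => hsize ▸ List.idxOf_lt_length_of_mem (hmem x)
    size := by
      rw [hsize, Nat.card_eq_fintype_card, ← List.toFinset_card_of_nodup hE.nodup,
        ← Finset.card_univ]
      congr
      ext x
      simp [hmem x]
    digit_σ := fun x => h.encodes.σ_records.digit_eq x (hC ▸ Finset.mem_coe.2 (Finset.mem_univ x))
    digit_ρ := fun x => h.encodes.ρ_records.digit_eq x (hmem x) }

/-- Processing a dart `a` with letter `x` leads from a state to the state `s`. -/
def StepsTo (σ ρ : Perm D) (d : D) (C : Finset D) (a : D) (l : List D) (b x : ℕ) (s : State) :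
    Prop :=
  ∃ C' vs' B', Reaches σ ρ d C' vs' B' (bif Nat.ble x 2 then b - 1 else b) s ∧
    C.card < C'.card ∧ letter σ ρ a l = x ∧
    advance x (ρ (σ a)) (ρ (ρ (σ a))) l = B'.flatten

theorem budget_pos [Finite D] {τ : Perm D} {C' : Finset D} {vs' : List D} {B' : List (List D)}
    {s : State} (hE : Explored σ ρ τ d C' vs' B') (he : Encodes σ ρ C' vs' B' s)
    (hsize : mapSize σ ρ ≤ 3 * b + partialSize σ ρ vs C)
    (hle : partialSize σ ρ vs C + 3 ≤ partialSize σ ρ vs' C') :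
    b ≠ 0 ∧ Reaches σ ρ d C' vs' B' (b - 1) s := by
  have := partialSize_le σ ρ hE.nodup C'
  exact ⟨by omega, ⟨τ, hE⟩, he, by omega⟩

variable [Fintype D]

theorem close_halfEdge
    (h : Reaches σ ρ d C vs ((a :: l) :: st) b
      ⟨((a :: l) :: st).map (List.map vs.idxOf), t⟩)
    (hD : Fintype.card D ≤ 32) (h0 : 0 ∈ A) (ha : σ a = a) :
    ∃ x ∈ moves A b (l.map vs.idxOf), StepsTo σ ρ d C a (l ++ st.flatten) b x
      (next x (vs.idxOf a) (l.map vs.idxOf) (st.map (List.map vs.idxOf)) t) := by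
  obtain ⟨τ, hE⟩ := h.explored
  have haC : a ∉ C := hE.notMem_of_mem List.mem_cons_self List.mem_cons_self
  obtain ⟨hb, hR⟩ := budget_pos (hE.close_halfEdge ha)
    (h.encodes.close_halfEdge hE (hE.nodup.length_le_card.trans hD) ha) h.budget
    (partialSize_insert haC ha).ge
  exact ⟨0, mem_moves_of_mem h0 hb _, _, _, _, hR, by rw [Finset.card_insert_of_notMem haC]; omega,
    letter_of_apply_eq ha _, (flatten_push _ _).symm⟩

theorem split
    (h : Reaches σ ρ d C vs ((a :: l) :: st) b
      ⟨((a :: l) :: st).map (List.map vs.idxOf), t⟩)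
    (hσ : ∀ x, σ (σ x) = x) (hD : Fintype.card D ≤ 32) (ha : σ a ≠ a) (hal : σ a ∈ l) :
    ∃ x ∈ moves A b (l.map vs.idxOf), StepsTo σ ρ d C a (l ++ st.flatten) b x
      (next x (vs.idxOf a) (l.map vs.idxOf) (st.map (List.map vs.idxOf)) t) := by
  obtain ⟨l₁, l₂, rfl, hl₁⟩ := List.eq_append_cons_of_mem hal
  obtain ⟨τ, hE⟩ := h.explored
  have hsub := subset_insert_insert C a (σ a)
  have haC : a ∉ C := hE.notMem_of_mem List.mem_cons_self List.mem_cons_self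
  refine ⟨l₁.length + 3, mem_moves_of_lt (by simp), _, _, _,
    ⟨⟨_, hE.split hσ⟩, h.encodes.split hE hσ (hE.nodup.length_le_card.trans hD) ha,
      h.budget.trans (Nat.add_le_add_left (partialSize_mono hsub) _)⟩,
    Finset.card_lt_card ((Finset.ssubset_iff_of_subset hsub).2 ⟨a, by simp, haC⟩), ?_, ?_⟩
  · rw [List.append_assoc, List.cons_append, letter_of_mem ha hl₁]
  · rw [flatten_push, flatten_push, List.append_assoc, List.cons_append, advance]
    simp [List.eraseIdx_append_of_length_le]

theorem join
    (h : Reaches σ ρ d C vs ((a :: l) :: st) b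
      ⟨((a :: l) :: st).map (List.map vs.idxOf), t⟩)
    (hσ : ∀ x, σ (σ x) = x) (hρ : ∀ x, ρ (ρ (ρ x)) = x) (hD : Fintype.card D ≤ 32)
    (hA1 : (∃ x, ρ x = x) → 1 ∈ A) (hA2 : 2 ∈ A) (hb : σ a ∉ vs) :
    ∃ x ∈ moves A b (l.map vs.idxOf), StepsTo σ ρ d C a (l ++ st.flatten) b x
      (next x (vs.idxOf a) (l.map vs.idxOf) (st.map (List.map vs.idxOf)) t) := by
  obtain ⟨τ, hE⟩ := h.explored
  have hE' := hE.join hσ hρ hb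
  have hsub := subset_insert_insert C a (σ a)
  have haC : a ∉ C := hE.notMem_of_mem List.mem_cons_self List.mem_cons_self
  have hav : a ∈ vs := hE.mem_iff.2 (Or.inr List.mem_cons_self)
  have hcard : C.card < (insert (σ a) (insert a C)).card :=
    Finset.card_lt_card ((Finset.ssubset_iff_of_subset hsub).2 ⟨a, by simp, haC⟩)
  have hletter := letter_of_notMem (ρ := ρ) (ne_of_mem_of_not_mem hav hb).symm
    (l := l ++ st.flatten) fun hx => hb (hE.mem_iff.2 (Or.inr (List.mem_cons_of_mem a hx)))
  have hsize : partialSize σ ρ vs C + 3 ≤ partialSize σ ρ (vs ++ σ a :: otherDarts ρ (σ a))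
      (insert (σ a) (insert a C)) :=
    (partialSize_append_le (σ a)).trans (partialSize_mono hsub)
  have hlen := hE'.nodup.length_le_card.trans hD
  by_cases hρb : ρ (σ a) = σ a
  · simp only [otherDarts, if_pos hρb] at hE' hsize hlen
    obtain ⟨hb0, hR⟩ := budget_pos hE' (h.encodes.join_one hE hσ hlen hb hρb) h.budget hsize
    refine ⟨1, mem_moves_of_mem (hA1 ⟨_, hρb⟩) hb0 _, _, _, _, hR, hcard, ?_,
      (flatten_push _ _).symm⟩
    rw [hletter, hρb, beq_self_eq_true, cond_true]
  · simp only [otherDarts, if_neg hρb] at hE' hsize hlen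
    obtain ⟨hb0, hR⟩ := budget_pos hE' (h.encodes.join_three hE hσ hρ hlen hE'.nodup)
      h.budget hsize
    refine ⟨2, mem_moves_of_mem hA2 hb0 _, _, _, _, hR, hcard, ?_, rfl⟩
    rw [hletter, beq_false_of_ne hρb, cond_false]

theorem exists_stepsTo
    (h : Reaches σ ρ d C vs ((a :: l) :: st) b
      ⟨((a :: l) :: st).map (List.map vs.idxOf), t⟩)
    (hσ : ∀ x, σ (σ x) = x) (hρ : ∀ x, ρ (ρ (ρ x)) = x)
    (planar : gluingDefect ρ σ ≤ gluingDefect ρ 1) (hD : Fintype.card D ≤ 32)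
    (hA0 : (∃ x, σ x = x) → 0 ∈ A) (hA1 : (∃ x, ρ x = x) → 1 ∈ A) (hA2 : 2 ∈ A) :
    ∃ x ∈ moves A b (l.map vs.idxOf), StepsTo σ ρ d C a (l ++ st.flatten) b x
      (next x (vs.idxOf a) (l.map vs.idxOf) (st.map (List.map vs.idxOf)) t) := by
  obtain ⟨τ, hE⟩ := h.explored
  by_cases ha : σ a = a
  · exact h.close_halfEdge hD (hA0 ⟨a, ha⟩) ha
  by_cases hb : σ a ∈ vs
  · exact h.split hσ hD ha (hE.mem_of_mem hσ planar ha hb)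
  · exact h.join hσ hρ hD hA1 hA2 hb

theorem exists_mem_leaves (hσ : ∀ x, σ (σ x) = x) (hρ : ∀ x, ρ (ρ (ρ x)) = x)
    (conn : ∀ x, orbitSetoid ρ σ d x) (planar : gluingDefect ρ σ ≤ gluingDefect ρ 1)
    (hD : Fintype.card D ≤ 32) (hA0 : (∃ x, σ x = x) → 0 ∈ A) (hA1 : (∃ x, ρ x = x) → 1 ∈ A)
    (hA2 : 2 ∈ A) {f : ℕ} {s : State} {u : List ℕ} {B : List (List D)}
    (h : Reaches σ ρ d C vs B b s) (hf : Fintype.card D < C.card + f) :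
    ∃ t e, (t, u.reverse ++ codeFrom σ ρ f B.flatten) ∈ leaves A f b s u ∧
      IsTableOf σ ρ d t e := by
  induction f generalizing b s u C vs B with
  | zero => exact absurd (Finset.card_le_univ C) (by omega)
  | succ f ih =>
    obtain ⟨blocks, t⟩ := s
    obtain rfl : blocks = B.map (List.map vs.idxOf) := h.encodes.blocks
    obtain ⟨τ, hE⟩ := h.explored
    obtain _ | ⟨_ | ⟨a, l⟩, st⟩ := B
    · refine ⟨t, _, ?_, h.isTableOf hσ hρ conn⟩
      rw [List.flatten_nil, codeFrom_nil, List.append_nil, List.map_nil, leaves_nil]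
      exact Multiset.mem_singleton_self _
    · exact absurd List.mem_cons_self hE.nil_notMem
    · obtain ⟨x, hx, C', vs', B', hR, hcard, hletter, hadv⟩ :=
        h.exists_stepsTo hσ hρ planar hD hA0 hA1 hA2
      obtain ⟨t', e, hmem, htab⟩ := ih (u := x :: u) hR (by omega)
      refine ⟨t', e, ?_, htab⟩
      rw [List.map_cons, List.map_cons, leaves_cons]
      refine Multiset.mem_bind.2 ⟨x, hx, ?_⟩
      rwa [List.flatten_cons, List.cons_append, codeFrom_cons, hletter, hadv, List.append_cons,
        ← List.reverse_cons]

end Reaches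

end Leaves

/-! ### Planar maps of size at most 24 -/

section CycleCounts

open Equiv Equiv.Perm

variable {D D' : Type*} {π : Perm D} {π' : Perm D'}

theorem numClasses_congr {s : Setoid D} {t : Setoid D'} (e : D ≃ D')
    (h : ∀ x y, s x y ↔ t (e x) (e y)) : numClasses s = numClasses t :=
  Nat.card_congr (Quotient.congr e h)

theorem numClasses_sameCycle_congr (e : D ≃ D') (h : ∀ x, π' (e x) = e (π x)) :
    numClasses (SameCycle.setoid π) = numClasses (SameCycle.setoid π') := by
  obtain rfl : π' = e.permCongrHom π := Equiv.ext fun x => by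
    rw [permCongrHom_coe, permCongr_apply, ← h, apply_symm_apply]
  refine numClasses_congr e fun x y => exists_congr fun k => ?_
  rw [← map_zpow, permCongrHom_coe, permCongr_apply, symm_apply_apply, e.apply_eq_iff_eq]

theorem numClasses_sameCycle_mul_comm (π₁ π₂ : Perm D) :
    numClasses (SameCycle.setoid (π₁ * π₂)) = numClasses (SameCycle.setoid (π₂ * π₁)) :=
  numClasses_sameCycle_congr π₂ fun _ => rfl

theorem card_sameCycle [Fintype D] {p : ℕ} (hp : p.Prime) (hπ : π ^ p = 1) {x : D}
    (hx : π x ≠ x) [DecidablePred (SameCycle π x)] :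
    (Finset.univ.filter (SameCycle π x)).card = p := by
  classical
  have := Fact.mk hp
  have hcycle : (cycleOf π x).IsCycle := isCycle_cycleOf π hx
  have hset : Finset.univ.filter (SameCycle π x) = (cycleOf π x).support := by
    ext y
    rw [Finset.mem_filter_univ, mem_support_cycleOf_iff' hx]
  rw [hset, ← hcycle.orderOf]
  exact ((Nat.dvd_prime hp).1 ((orderOf_cycleOf_dvd_orderOf π x).trans
    (orderOf_dvd_of_pow_eq_one hπ))).resolve_left fun h => hcycle.ne_one (orderOf_eq_one_iff.1 h)

theorem sum_sameCycle_weight [Fintype D] [DecidableEq D] {p : ℕ} (hp : p.Prime) (hπ : π ^ p = 1)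
    (a : D) [DecidablePred (SameCycle π a)] :
    ∑ x with SameCycle π a x, (if π x = x then p else 1) = p := by
  by_cases ha : π a = a
  · have hset : Finset.univ.filter (SameCycle π a) = {a} := by
      ext x
      rw [Finset.mem_filter_univ, Finset.mem_singleton]
      exact ⟨fun h => (h.eq_of_left ha).symm, fun h => h ▸ SameCycle.refl π a⟩
    rw [hset, Finset.sum_singleton, if_pos ha]
  · conv_rhs => rw [← card_sameCycle hp hπ ha, Finset.card_eq_sum_ones]
    refine Finset.sum_congr rfl fun x hx => if_neg fun hxx => ha ?_
    rw [(Finset.mem_filter_univ x).1 hx |>.eq_of_right hxx, hxx]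

theorem prime_mul_numClasses_sameCycle [Finite D] {p : ℕ} (hp : p.Prime) (hπ : π ^ p = 1) :
    p * numClasses (SameCycle.setoid π) = Nat.card D + (p - 1) * Nat.card {x // π x = x} := by
  classical
  have := Fintype.ofFinite D
  let weight (x : D) : ℕ := if π x = x then p else 1
  have hfiber (q : Quotient (SameCycle.setoid π)) :
      ∑ x with Quotient.mk (SameCycle.setoid π) x = q, weight x = p := by
    obtain ⟨a, rfl⟩ := Quotient.mk_surjective q
    rw [← sum_sameCycle_weight hp hπ a]
    exact Finset.sum_congr (Finset.filter_congr fun x _ => Quotient.eq.trans sameCycle_comm)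
      fun _ _ => rfl
  calc p * numClasses (SameCycle.setoid π)
    _ = ∑ q, ∑ x with Quotient.mk (SameCycle.setoid π) x = q, weight x := by
      simp only [hfiber, Finset.sum_const, smul_eq_mul, numClasses, Nat.card_eq_fintype_card,
        Finset.card_univ, mul_comm]
    _ = ∑ x, weight x := Finset.sum_fiberwise _ _ _
    _ = ∑ x, (1 + if π x = x then p - 1 else 0) := by
      refine Finset.sum_congr rfl fun x _ => ?_
      have := hp.pos
      grind
    _ = Nat.card D + (p - 1) * Nat.card {x // π x = x} := by
      rw [Finset.sum_add_distrib, ← Finset.sum_filter, Finset.sum_const, Finset.sum_const,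
        smul_eq_mul, smul_eq_mul, Nat.card_eq_fintype_card, Nat.card_eq_fintype_card,
        Fintype.card_subtype, Finset.card_univ, mul_one, mul_comm]

end CycleCounts

section IsK3Map

open Equiv Equiv.Perm

variable {D D' : Type*} {σ ρ : Perm D} {σ' ρ' : Perm D'}

/-- The combinatorial form of the subgroups to be counted: connected planar maps, in which all
vertices have degree 1 or 3 and half-edges are allowed, of size at most 24. The darts around
vertices are permuted by `ρ` and those on edges by `σ`. -/
structure IsK3Map (σ ρ : Perm D) : Prop where
  σ_sq : ∀ x, σ (σ x) = x
  ρ_cube : ∀ x, ρ (ρ (ρ x)) = x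
  connected : ∀ x y, orbitSetoid ρ σ x y
  genus : numClasses (SameCycle.setoid σ) + numClasses (SameCycle.setoid ρ) +
    numClasses (SameCycle.setoid (σ * ρ)) = Nat.card D + 2
  size_le : mapSize σ ρ ≤ 24

theorem two_mul_numClasses [Finite D] (hσ : ∀ x, σ (σ x) = x) :
    2 * numClasses (SameCycle.setoid σ) = Nat.card D + Nat.card {x // σ x = x} := by
  rw [prime_mul_numClasses_sameCycle Nat.prime_two (by ext x; rw [sq]; exact hσ x), Nat.one_mul]

theorem three_mul_numClasses [Finite D] (hρ : ∀ x, ρ (ρ (ρ x)) = x) :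
    3 * numClasses (SameCycle.setoid ρ) = Nat.card D + 2 * Nat.card {x // ρ x = x} :=
  prime_mul_numClasses_sameCycle Nat.prime_three (by ext x; exact hρ x)

namespace IsK3Map

theorem card_le (h : IsK3Map σ ρ) : Nat.card D ≤ 24 :=
  (Nat.le_add_right_of_le (Nat.le_add_right _ _)).trans h.size_le

theorem planar [Fintype D] [DecidableEq D] (h : IsK3Map σ ρ) :
    gluingDefect ρ σ ≤ gluingDefect ρ 1 := by
  have horbit : numClasses (orbitSetoid ρ σ) ≤ 1 :=
    Finite.card_le_one_iff_subsingleton.2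
      ⟨Quotient.ind₂ fun x y => Quotient.sound (h.connected x y)⟩
  have hone : orbitSetoid ρ 1 = SameCycle.setoid ρ :=
    le_antisymm (orbitSetoid_le (sameCycle_setoid_apply ρ) (Setoid.refl' _)) le_sup_left
  have hsupport : σ.support.card + Nat.card {x // σ x = x} = Nat.card D := by
    rw [Nat.card_eq_fintype_card, Nat.card_eq_fintype_card, Fintype.card_subtype,
      ← Finset.card_univ, add_comm]
    exact Finset.card_filter_add_card_filter_not _
  have h₂ := two_mul_numClasses h.σ_sq
  have hgenus := h.genus
  rw [numClasses_sameCycle_mul_comm] at hgenus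
  unfold gluingDefect
  rw [hone, mul_one, support_one, Finset.card_empty]
  omega

theorem nonempty (h : IsK3Map σ ρ) : Nonempty D := by
  by_contra hD
  rw [not_nonempty_iff] at hD
  simpa [numClasses] using h.genus

theorem mapSize_mem [Finite D] (h : IsK3Map σ ρ) :
    mapSize σ ρ ∈ ({6, 12, 18, 24} : Set ℕ) := by
  have h₂ := two_mul_numClasses h.σ_sq
  have h₃ := three_mul_numClasses h.ρ_cube
  have hgenus := h.genus
  have hsize := h.size_le
  have hpos : 0 < Nat.card D := Finite.card_pos_iff.2 h.nonempty
  simp only [Set.mem_insert_iff, Set.mem_singleton_iff]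
  unfold mapSize at *
  omega

theorem congr (h : IsK3Map σ ρ) (e : D ≃ D') (hσ : ∀ x, σ' (e x) = e (σ x))
    (hρ : ∀ x, ρ' (e x) = e (ρ x)) : IsK3Map σ' ρ' where
  σ_sq := e.forall_congr_right.1 fun x => by rw [hσ, hσ, h.σ_sq]
  ρ_cube := e.forall_congr_right.1 fun x => by rw [hρ, hρ, hρ, h.ρ_cube]
  connected := e.forall_congr_right.1 fun x => e.forall_congr_right.1 fun y =>
    orbitSetoid_le (t := (orbitSetoid ρ' σ').comap e)
      (fun z => show orbitSetoid ρ' σ' (e z) _ from hρ z ▸ orbitSetoid_left ρ' σ' (e z))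
      (fun z => show orbitSetoid ρ' σ' (e z) _ from hσ z ▸ orbitSetoid_right ρ' σ' (e z))
      (h.connected x y)
  genus := by
    rw [← numClasses_sameCycle_congr e hσ, ← numClasses_sameCycle_congr e hρ,
      ← numClasses_sameCycle_congr (π := σ * ρ) e fun x => by
        rw [Perm.mul_apply, Perm.mul_apply, hρ, hσ], h.genus, Nat.card_congr e]
  size_le := by
    have hfix {π : Perm D} {π' : Perm D'} (hπ : ∀ x, π' (e x) = e (π x)) :
        Nat.card {x // π' x = x} = Nat.card {x // π x = x} :=
      (Nat.card_congr (e.subtypeEquiv fun x => by rw [hπ, e.apply_eq_iff_eq])).symm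
    have := h.size_le
    rwa [mapSize, Nat.card_congr e, ← hfix hσ, ← hfix hρ] at this

end IsK3Map

end IsK3Map

/-! ### The catalogue of rooted maps -/

/-- The sum of `v t w` over the tables `t` of a family of rooted planar maps with code `w` which
contains every map of size at most 24 rooted at a dart with minimal code. Such a root is at a vertex
of degree 1 if there is one, and otherwise on a half-edge if there is one. -/
noncomputable def catalogueSum {M : Type*} [Zero M] [Add M] (v : Table → List ℕ → M) : M :=
  tally v [0, 1, 2] 25 7 ⟨[[0]], 1, 0, 0⟩ [0] +
    tally v [0, 2] 24 6 (next 0 0 [1, 2] [] ⟨3, 0, 65⟩) [0, 1] +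
    tally v [2] 25 7 ⟨[[0, 1, 2]], 3, 0, 65⟩ [1]

/-- Comparison of lists in the lexicographic order. -/
noncomputable def lexLE (w : List ℕ) : List ℕ → Bool :=
  List.rec (fun _ => true) (fun x _ ih k =>
    List.rec false (fun y k _ => bif Nat.beq x y then ih k else Nat.ble x y) k) w

/-- Whether `p` holds for all numbers less than `n`. -/
noncomputable def allBelow (p : ℕ → Bool) (n : ℕ) : Bool :=
  Nat.rec true (fun i ih => bif p i then ih else false) n

/-- The number of numbers less than `n` with property `p`. -/
noncomputable def countBelow (p : ℕ → Bool) (n : ℕ) : ℕ :=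
  Nat.rec 0 (fun i ih => bif p i then Nat.succ ih else ih) n

/-- Whether the first `k` iterates of `f`, starting from `x` itself, are at least `i`. -/
noncomputable def staysAbove (f : ℕ → ℕ) (i k : ℕ) : ℕ → Bool :=
  Nat.rec (fun _ => true) (fun _ ih x => bif Nat.ble i x then ih (f x) else false) k

/-- The test of equality by `Nat.beq`, which the kernel evaluates much faster than an instance
derived from `DecidableEq ℕ`. -/
abbrev natBEq : BEq ℕ :=
  ⟨Nat.beq⟩

instance natBEq_lawful : @LawfulBEq ℕ natBEq :=
  @LawfulBEq.mk ℕ natBEq (@ReflBEq.mk ℕ natBEq (Nat.beq_refl _)) Nat.eq_of_beq_eq_true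

/-- The code of the map encoded by `t`, rooted at `d`. -/
noncomputable def Table.code (t : Table) (d : ℕ) : List ℕ :=
  @ModularMonodromy.code ℕ natBEq (digit t.σ) (digit t.ρ) d

/-- Whether `w` is at most the code of `t` for any root other than `0`. -/
noncomputable def canonical (t : Table) (w : List ℕ) : Bool :=
  allBelow (fun d => lexLE w (t.code (Nat.sub t.size (Nat.succ d)))) (Nat.pred t.size)

/-- Whether the restrictions of `σ` and `ρ` to `{0, …, n - 1}` form a map satisfying `IsK3Map`. For
connectedness it is required that each dart other than `0` has a smaller neighbour; cycles
are counted by their least elements. -/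
noncomputable def valid (n : ℕ) (σ ρ : ℕ → ℕ) : Bool :=
  allBelow (fun i => Nat.blt (σ i) n && Nat.blt (ρ i) n && Nat.beq (σ (σ i)) i &&
    Nat.beq (ρ (ρ (ρ i))) i &&
    (Nat.beq i 0 || Nat.blt (σ i) i || Nat.blt (ρ i) i || Nat.blt (ρ (ρ i)) i)) n &&
  Nat.ble (n + 3 * countBelow (fun i => Nat.beq (σ i) i) n +
    2 * countBelow (fun i => Nat.beq (ρ i) i) n) 24 &&
  Nat.beq (6 * countBelow (fun i => staysAbove (fun x => σ (ρ x)) i n i) n +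
    3 * countBelow (fun i => Nat.beq (σ i) i) n + 4 * countBelow (fun i => Nat.beq (ρ i) i) n)
    (n + 12)

/-- The contribution of a table to the count. A failure would contribute more than the total. -/
noncomputable def value (t : Table) (w : List ℕ) : ℕ :=
  bif canonical t w then
    bif valid t.size (digit t.σ) (digit t.ρ) && lexLE w (t.code 0) && lexLE (t.code 0) w
    then 1 else 10000
  else 0

set_option maxRecDepth 100000 in
theorem catalogueSum_value : catalogueSum value = 3228 := by
  decide +kernel

section Evaluation

open Equiv Equiv.Perm

theorem cons_le_cons_iff {α : Type*} [LinearOrder α] {x y : α} {w k : List α} :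
    x :: w ≤ y :: k ↔ x < y ∨ x = y ∧ w ≤ k := by
  rw [← not_lt, List.cons_lt_cons_iff, ← not_lt (b := w)]
  grind

theorem lexLE_iff {w k : List ℕ} : lexLE w k = true ↔ w ≤ k := by
  induction w generalizing k with
  | nil => exact iff_of_true rfl (not_lt.1 (List.not_lt_nil k))
  | cons x w ih =>
    cases k with
    | nil => exact iff_of_false Bool.false_ne_true (not_le.2 (List.nil_lt_cons x w))
    | cons y k =>
      change (bif Nat.beq x y then lexLE w k else Nat.ble x y) = true ↔ _
      simp only [Bool.cond_eq_true_distrib, ih, cons_le_cons_iff, Nat.beq_eq, Nat.ble_eq]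
      grind

theorem allBelow_iff {p : ℕ → Bool} {n : ℕ} : allBelow p n = true ↔ ∀ i < n, p i = true := by
  induction n with
  | zero => exact iff_of_true rfl fun i hi => absurd hi i.not_lt_zero
  | succ n ih =>
    change (bif p n then allBelow p n else false) = true ↔ _
    rw [Bool.cond_false_right, Bool.and_eq_true, ih, Nat.forall_lt_succ_right, and_comm]

theorem countBelow_eq (p : ℕ → Bool) (n : ℕ) :
    countBelow p n = Nat.card {i : Fin n // p i = true} := by
  have hcount : countBelow p n = Nat.count (p · = true) n := by
    induction n with
    | zero => rfl
    | succ n ih =>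
      change (bif p n then countBelow p n + 1 else countBelow p n) = _
      rw [Nat.count_succ, ih]
      cases p n <;> rfl
  rw [hcount, Nat.count_eq_card_fintype, Fintype.card_eq_nat_card]
  exact Nat.card_congr
    ⟨fun k => ⟨⟨k, k.2.1⟩, k.2.2⟩, fun i => ⟨i.1, i.1.2, i.2⟩, fun _ => rfl, fun _ => rfl⟩

theorem staysAbove_iff {f : ℕ → ℕ} {i k x : ℕ} :
    staysAbove f i k x = true ↔ ∀ j < k, i ≤ f^[j] x := by
  induction k generalizing x with
  | zero => exact iff_of_true rfl fun j hj => absurd hj j.not_lt_zero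
  | succ k ih =>
    change (bif Nat.ble i x then staysAbove f i k (f x) else false) = true ↔ _
    rw [Bool.cond_false_right, Bool.and_eq_true, ih, Nat.forall_lt_succ_left, Nat.ble_eq]
    rfl

theorem canonical_iff {t : Table} {w : List ℕ} :
    canonical t w = true ↔ ∀ d < t.size, d ≠ 0 → w ≤ t.code d := by
  rw [canonical, allBelow_iff]
  simp only [lexLE_iff, Nat.sub_eq, Nat.pred_eq_sub_one]
  refine ⟨fun h d hd hd0 => ?_, fun h i hi => h _ (by omega) (by omega)⟩
  have := h (t.size - (d + 1)) (by omega)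
  rwa [show t.size - (t.size - (d + 1) + 1) = d by omega] at this

theorem numClasses_eq_card_least {α : Type*} [LinearOrder α] [Finite α] (s : Setoid α) :
    numClasses s = Nat.card {x // ∀ y, s x y → x ≤ y} := by
  refine (Nat.card_congr (Equiv.ofBijective
    (fun x : {x // ∀ y, s x y → x ≤ y} => Quotient.mk s x.1) ⟨fun x y hxy => ?_, ?_⟩)).symm
  · have hxy := Quotient.exact hxy
    exact Subtype.ext (le_antisymm (x.2 _ hxy) (y.2 _ (Setoid.symm' s hxy)))
  · refine Quotient.ind fun a => ?_
    obtain ⟨x, hxa, hx⟩ := (Set.toFinite {x | s a x}).exists_minimal ⟨a, Setoid.refl' s a⟩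
    have hle (y : α) (hy : s x y) : x ≤ y :=
      not_lt.1 fun hlt => hlt.not_ge (hx (Setoid.trans' s hxa hy) hlt.le)
    exact ⟨⟨x, hle⟩, Quotient.sound (Setoid.symm' s hxa)⟩

theorem exists_iterate_eq_of_sameCycle {α : Type*} [Fintype α] {π : Perm α} {x y : α}
    (h : SameCycle π x y) : ∃ j < Fintype.card α, π^[j] x = y := by
  classical
  by_cases hx : π x = x
  · exact ⟨0, Fintype.card_pos_iff.2 ⟨x⟩, h.eq_of_left hx⟩
  · obtain ⟨j, hj, rfl⟩ := h.exists_pow_eq_of_mem_support (mem_support.2 hx)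
    exact ⟨j, hj.trans_le (Finset.card_le_univ _), by rw [iterate_eq_pow]⟩

variable {n : ℕ} {σ ρ π : Perm (Fin n)} {f : ℕ → ℕ}

theorem iterate_val (hf : ∀ i : Fin n, f i = π i) (j : ℕ) (i : Fin n) : f^[j] i = π^[j] i :=
  (Function.Semiconj.iterate_right (f := Fin.val) (fun i => (hf i).symm) j i).symm

theorem countBelow_fixed (hf : ∀ i : Fin n, f i = π i) :
    countBelow (fun i => Nat.beq (f i) i) n = Nat.card {i // π i = i} := by
  simp only [countBelow_eq, Nat.beq_eq, hf, Fin.val_inj]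

theorem countBelow_staysAbove (hf : ∀ i : Fin n, f i = π i) :
    countBelow (fun i => staysAbove f i n i) n = numClasses (SameCycle.setoid π) := by
  rw [countBelow_eq, numClasses_eq_card_least]
  refine Nat.card_congr (Equiv.subtypeEquivRight fun i => ?_)
  rw [staysAbove_iff]
  refine ⟨fun h y hy => ?_, fun h j _ => ?_⟩
  · obtain ⟨j, hj, rfl⟩ := exists_iterate_eq_of_sameCycle hy
    rw [Fintype.card_fin] at hj
    exact (h j hj).trans_eq (iterate_val hf j i)
  · rw [iterate_val hf, iterate_eq_pow]
    exact h _ (SameCycle.refl π i).pow_right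

theorem orbitSetoid_zero_of_descent
    (h : ∀ i : Fin n, (i : ℕ) = 0 ∨ σ i < i ∨ ρ i < i ∨ ρ (ρ i) < i) (i : Fin n) :
    orbitSetoid ρ σ i ⟨0, i.pos⟩ := by
  induction i using WellFoundedLT.induction with
  | ind i ih =>
    have hρ := orbitSetoid_left ρ σ i
    rcases h i with h | h | h | h
    · exact (Fin.ext h : i = ⟨0, i.pos⟩) ▸ Setoid.refl' _ _
    · exact Setoid.trans' _ (orbitSetoid_right ρ σ i) (ih _ h)
    · exact Setoid.trans' _ hρ (ih _ h)
    · exact Setoid.trans' _ (Setoid.trans' _ hρ (orbitSetoid_left ρ σ _)) (ih _ h)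

theorem exists_isK3Map_of_valid {g : ℕ → ℕ} (h : valid n f g = true) :
    ∃ σ ρ : Perm (Fin n), (∀ i : Fin n, f i = σ i) ∧ (∀ i : Fin n, g i = ρ i) ∧ IsK3Map σ ρ := by
  simp only [valid, Bool.and_eq_true, allBelow_iff, Nat.blt_eq, Nat.beq_eq, Nat.ble_eq,
    Bool.or_eq_true, and_assoc] at h
  obtain ⟨hlocal, hsize, hgenus⟩ := h
  choose! hf hg hf₂ hg₃ hdesc using hlocal
  let σ : Perm (Fin n) := ⟨fun i => ⟨f i, hf i i.2⟩, fun i => ⟨f i, hf i i.2⟩,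
    fun i => Fin.ext (hf₂ i i.2), fun i => Fin.ext (hf₂ i i.2)⟩
  let ρ : Perm (Fin n) := ⟨fun i => ⟨g i, hg i i.2⟩, fun i => ⟨g (g i), hg _ (hg i i.2)⟩,
    fun i => Fin.ext (hg₃ i i.2), fun i => Fin.ext (hg₃ i i.2)⟩
  have hσ (i : Fin n) : f i = σ i := rfl
  have hρ (i : Fin n) : g i = ρ i := rfl
  have hconn := orbitSetoid_zero_of_descent (σ := σ) (ρ := ρ) fun i =>
    (or_assoc.trans or_assoc).1 (hdesc i i.2)
  have hσ_sq (i : Fin n) : σ (σ i) = i := Fin.ext (hf₂ i i.2)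
  have hρ_cube (i : Fin n) : ρ (ρ (ρ i)) = i := Fin.ext (hg₃ i i.2)
  rw [countBelow_fixed hσ, countBelow_fixed hρ] at hsize hgenus
  rw [countBelow_staysAbove (f := fun x => f (g x)) (π := σ * ρ) fun _ => rfl] at hgenus
  have h₂ := two_mul_numClasses hσ_sq
  have h₃ := three_mul_numClasses hρ_cube
  rw [Nat.card_fin] at h₂ h₃
  refine ⟨σ, ρ, hσ, hρ, hσ_sq, hρ_cube,
    fun i j => Setoid.trans' _ (hconn i) (Setoid.symm' _ (hconn j)), ?_, ?_⟩
  · rw [Nat.card_fin]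
    omega
  · rwa [mapSize, Nat.card_fin]

end Evaluation

section Catalogue

/-- The family of rooted maps summed over by `catalogueSum`, with their codes. -/
noncomputable def catalogue : Multiset (Table × List ℕ) :=
  leaves [0, 1, 2] 25 7 ⟨[[0]], 1, 0, 0⟩ [0] +
    leaves [0, 2] 24 6 (next 0 0 [1, 2] [] ⟨3, 0, 65⟩) [0, 1] +
    leaves [2] 25 7 ⟨[[0, 1, 2]], 3, 0, 65⟩ [1]

theorem catalogueSum_eq_sum (v : Table → List ℕ → ℕ) :
    catalogueSum v = (catalogue.map fun p => v p.1 p.2).sum := by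
  rw [catalogue, Multiset.map_add, Multiset.map_add, Multiset.sum_add, Multiset.sum_add,
    ← tally_eq_sum_leaves, ← tally_eq_sum_leaves, ← tally_eq_sum_leaves, catalogueSum]

theorem prefix_of_mem_leaves_trivalent {p : Table × List ℕ}
    (hp : p ∈ leaves [2] 25 7 ⟨[[0, 1, 2]], 3, 0, 65⟩ [1]) : ∃ x ≠ 0, [1, x] <+: p.2 := by
  rw [leaves_cons, Multiset.mem_bind] at hp
  obtain ⟨x, hx, hp⟩ := hp
  refine ⟨x, ?_, prefix_of_mem_leaves hp⟩
  rintro rfl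
  exact absurd hx (by decide)

theorem nodup_map_catalogue : (catalogue.map Prod.snd).Nodup := by
  have head_ne {p q : Table × List ℕ} {w k : List ℕ} (hp : w <+: p.2) (hq : k <+: q.2)
      (hwk : ¬ w <+: k) (hlen : w.length ≤ k.length) : p.2 ≠ q.2 := fun h =>
    hwk (List.prefix_of_prefix_length_le (h ▸ hp) hq hlen)
  rw [catalogue, Multiset.map_add, Multiset.map_add, Multiset.nodup_add, Multiset.nodup_add]
  refine ⟨⟨nodup_map_leaves (by decide) (by decide) .., nodup_map_leaves (by decide) (by decide) ..,
    ?_⟩, nodup_map_leaves (by decide) (by decide) .., ?_⟩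
  · simp only [Multiset.disjoint_left, Multiset.mem_map]
    rintro _ ⟨p, hp, rfl⟩ ⟨q, hq, h⟩
    exact head_ne (prefix_of_mem_leaves hp) (prefix_of_mem_leaves hq) (by decide) (by decide) h.symm
  · simp only [Multiset.disjoint_left, Multiset.mem_add, Multiset.mem_map]
    rintro _ (⟨p, hp, rfl⟩ | ⟨p, hp, rfl⟩) ⟨q, hq, h⟩ <;>
    obtain ⟨x, hx, hq⟩ := prefix_of_mem_leaves_trivalent hq
    · exact head_ne (prefix_of_mem_leaves hp) hq (by simp) (by simp) h.symm
    · refine head_ne (prefix_of_mem_leaves hp) hq (fun hpre => hx ?_) le_rfl h.symm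
      exact (List.cons.inj (List.cons.inj (hpre.eq_of_length rfl)).2).1.symm

theorem value_eq {p : Table × List ℕ} (hp : p ∈ catalogue) :
    value p.1 p.2 = if canonical p.1 p.2 then 1 else 0 := by
  have hle : value p.1 p.2 ≤ 3228 := by
    rw [← catalogueSum_value, catalogueSum_eq_sum]
    exact Multiset.le_sum_of_mem (Multiset.mem_map_of_mem (fun p => value p.1 p.2) hp)
  unfold value at hle ⊢
  grind

/-- The codes of the maps in the catalogue whose root has minimal code. -/
noncomputable def canonicalWords : Finset (List ℕ) :=
  ((catalogue.filter fun p => canonical p.1 p.2).map Prod.snd).toFinset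

theorem card_canonicalWords : canonicalWords.card = 3228 := by
  have hsum (s : Multiset (Table × List ℕ)) : (s.filter fun p => canonical p.1 p.2).card =
      (s.map fun p => if canonical p.1 p.2 then 1 else 0).sum := by
    induction s using Multiset.induction with
    | empty => rfl
    | cons p s ih =>
      rw [Multiset.filter_cons, Multiset.map_cons, Multiset.sum_cons, Multiset.card_add, ih]
      split_ifs <;> rfl
  have hnodup : ((catalogue.filter fun p => canonical p.1 p.2).map Prod.snd).Nodup :=
    Multiset.nodup_of_le (Multiset.map_le_map (Multiset.filter_le _ _)) nodup_map_catalogue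
  rw [canonicalWords, Multiset.toFinset_card_of_nodup hnodup, Multiset.card_map, hsum,
    ← Multiset.map_congr rfl fun p hp => value_eq hp, ← catalogueSum_eq_sum value,
    catalogueSum_value]

theorem mem_canonicalWords {w : List ℕ} :
    w ∈ canonicalWords ↔ ∃ t, (t, w) ∈ catalogue ∧ canonical t w = true := by
  simp [canonicalWords]

theorem table_injective {t t' : Table} {w : List ℕ} (h : (t, w) ∈ catalogue)
    (h' : (t', w) ∈ catalogue) : t = t' :=
  congrArg Prod.fst (Multiset.inj_on_of_nodup_map nodup_map_catalogue _ h _ h' rfl)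

open Equiv Equiv.Perm

theorem exists_isK3Map_of_mem_canonicalWords {w : List ℕ} (hw : w ∈ canonicalWords) :
    ∃ (n : ℕ) (σ ρ : Perm (Fin n)) (d : Fin n), IsK3Map σ ρ ∧ code σ ρ d = w ∧
      ∀ x, code σ ρ d ≤ code σ ρ x := by
  obtain ⟨t, ht, hcan⟩ := mem_canonicalWords.1 hw
  have hvalue := value_eq ht
  simp only [value, hcan, cond_true, if_true] at hvalue
  have hcheck : valid t.size (digit t.σ) (digit t.ρ) && lexLE w (t.code 0) &&
      lexLE (t.code 0) w := by
    grind
  rw [Bool.and_eq_true, Bool.and_eq_true, lexLE_iff, lexLE_iff, and_assoc] at hcheck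
  obtain ⟨σ, ρ, hσ, hρ, hmap⟩ := exists_isK3Map_of_valid hcheck.1
  have hcode (x : Fin t.size) : t.code x = code σ ρ x :=
    @code_map (Fin t.size) _ _ ℕ natBEq _ Fin.val σ ρ (digit t.σ) (digit t.ρ) Fin.val_injective
      hσ hρ x
  obtain ⟨d⟩ := hmap.nonempty
  let root : Fin t.size := ⟨0, d.pos⟩
  have hroot : code σ ρ root = w := hcode root ▸ le_antisymm hcheck.2.2 hcheck.2.1
  refine ⟨t.size, σ, ρ, root, hmap, hroot, fun x => ?_⟩
  by_cases hx : x = root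
  · rw [hx]
  · rw [hroot, ← hcode]
    exact canonical_iff.1 hcan x x.2 fun hx0 => hx (Fin.ext hx0)

end Catalogue

section Code

variable {α : Type*} [BEq α]

theorem locate_ne_zero (b : α) {x : ℕ} (hx : x ≠ 0) (l : List α) {j : ℕ} (hj : j ≠ 0) :
    locate b x l j ≠ 0 := by
  induction l generalizing j with
  | nil => exact hx
  | cons y l ih =>
    rw [locate_cons]
    cases b == y
    · exact ih j.succ_ne_zero
    · exact hj

variable [LawfulBEq α] {σ ρ : α → α} {a : α}

theorem letter_ne_zero (h : σ a ≠ a) (l : List α) : letter σ ρ a l ≠ 0 := by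
  rw [letter, beq_false_of_ne h, cond_false]
  refine locate_ne_zero _ ?_ _ three_ne_zero
  cases ρ (σ a) == σ a <;> decide

theorem code_of_apply_eq (h : ρ a = a) : code σ ρ a = 0 :: codeFrom σ ρ 25 [a] := by
  rw [code, h, beq_self_eq_true, cond_true]

theorem code_of_apply_ne (h : ρ a ≠ a) : code σ ρ a = 1 :: codeFrom σ ρ 25 [a, ρ a, ρ (ρ a)] := by
  rw [code, beq_false_of_ne h, cond_false]

theorem code_of_apply_ne_of_apply_eq (hρ : ρ a ≠ a) (hσ : σ a = a) :
    code σ ρ a = 1 :: 0 :: codeFrom σ ρ 24 [ρ a, ρ (ρ a)] := by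
  rw [code_of_apply_ne hρ, codeFrom_cons, letter_of_apply_eq hσ]
  rfl

theorem root_apply_eq {x : α} (hmin : code σ ρ a ≤ code σ ρ x) (hx : ρ x = x) : ρ a = a := by
  by_contra ha
  rw [code_of_apply_eq hx, code_of_apply_ne ha, cons_le_cons_iff] at hmin
  omega

theorem root_apply_eq_of_ne {x : α} (hmin : code σ ρ a ≤ code σ ρ x) (hρ : ρ x ≠ x)
    (hx : σ x = x) (ha : ρ a ≠ a) : σ a = a := by
  by_contra hσ
  rw [code_of_apply_ne_of_apply_eq hρ hx, code_of_apply_ne ha, codeFrom_cons, cons_le_cons_iff,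
    cons_le_cons_iff] at hmin
  have := letter_ne_zero (ρ := ρ) hσ [ρ a, ρ (ρ a)]
  omega

end Code

section Start

open Equiv Equiv.Perm

variable {D : Type*} [DecidableEq D] {σ ρ : Perm D} {d : D}

theorem Explored.start (hρ : ∀ x, ρ (ρ (ρ x)) = x) :
    Explored σ ρ 1 d ∅ (d :: otherDarts ρ d) [d :: otherDarts ρ d] where
  nodup := nodup_cons_otherDarts hρ d
  root := List.prefix_append [d] _
  apply_mem := fun _ => apply_mem_cons_otherDarts hρ
  gluing := fun _ => rfl
  connected := fun _ => orbitSetoid_of_mem_cons_otherDarts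
  found := by simp
  nil_notMem := by simp
  boundary := fun l hl => List.mem_singleton.1 hl ▸ isBoundary_cons_otherDarts hρ _ fun _ _ => rfl

theorem Encodes.start_one (hd : ρ d = d) : Encodes σ ρ ∅ [d] [[d]] ⟨[[0]], 1, 0, 0⟩ where
  size := rfl
  blocks := by simp
  σ_records := by simpa using Records.zero σ [d]
  ρ_records := by
    have hempty : Records ρ {x | x ∈ []} [] 0 := by simpa using Records.zero ρ []
    exact hempty.vertex_one (by simp) List.not_mem_nil hd (by simp)

theorem map_idxOf_otherDarts (hρ : ∀ x, ρ (ρ (ρ x)) = x) (hd : ρ d ≠ d) :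
    [ρ d, ρ (ρ d)].map [d, ρ d, ρ (ρ d)].idxOf = [1, 2] := by
  have hnd := nodup_cons_otherDarts hρ d
  rw [otherDarts, if_neg hd] at hnd
  exact congrArg₂ (fun i j => [i, j]) (hnd.idxOf_getElem 1 (by simp))
    (hnd.idxOf_getElem 2 (by simp))

theorem Encodes.start_three (hρ : ∀ x, ρ (ρ (ρ x)) = x) (hd : ρ d ≠ d) :
    Encodes σ ρ ∅ [d, ρ d, ρ (ρ d)] [[d, ρ d, ρ (ρ d)]] ⟨[[0, 1, 2]], 3, 0, 65⟩ where
  size := rfl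
  blocks := by
    rw [List.map_singleton, List.map_cons, map_idxOf_otherDarts hρ hd, List.idxOf_cons_self]
  σ_records := by simpa using Records.zero σ _
  ρ_records := by
    have hempty : Records ρ {x | x ∈ []} [] 0 := by simpa using Records.zero ρ []
    have hnd := nodup_cons_otherDarts hρ d
    rw [otherDarts, if_neg hd] at hnd
    have hput : put (put (put 0 0 1) 1 2) 2 0 = 65 := rfl
    change Records ρ _ _ 65
    rw [← hput]
    exact hempty.vertex_three (by simp) (hρ d) hnd (by simp)

theorem Reaches.start_one (h : IsK3Map σ ρ) (hd : ρ d = d) :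
    Reaches σ ρ d ∅ [d] [[d]] 7 ⟨[[0]], 1, 0, 0⟩ where
  explored := ⟨1, by simpa only [otherDarts, if_pos hd] using Explored.start (d := d) h.ρ_cube⟩
  encodes := Encodes.start_one hd
  budget := by simpa [partialSize, hd] using h.size_le

theorem Reaches.start_three (h : IsK3Map σ ρ) (hd : ρ d ≠ d) :
    Reaches σ ρ d ∅ [d, ρ d, ρ (ρ d)] [[d, ρ d, ρ (ρ d)]] 7 ⟨[[0, 1, 2]], 3, 0, 65⟩ where
  explored := ⟨1, by simpa only [otherDarts, if_neg hd] using Explored.start (d := d) h.ρ_cube⟩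
  encodes := Encodes.start_three h.ρ_cube hd
  budget := by simpa [partialSize, hd] using h.size_le

variable [Finite D]

theorem Reaches.start_halfEdge (h : IsK3Map σ ρ) (hρ : ρ d ≠ d) (hσ : σ d = d) :
    Reaches σ ρ d {d} [d, ρ d, ρ (ρ d)] [[ρ d, ρ (ρ d)]] 6 (next 0 0 [1, 2] [] ⟨3, 0, 65⟩) := by
  have hstart := Reaches.start_three h hρ
  obtain ⟨τ, hE⟩ := hstart.explored
  have he := hstart.encodes
  have hblocks : [[0, 1, 2]] = [[d, ρ d, ρ (ρ d)]].map (List.map [d, ρ d, ρ (ρ d)].idxOf) :=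
    he.blocks
  rw [hblocks] at he
  have hnext := he.close_halfEdge hE (by simp) hσ
  rw [List.idxOf_cons_self, map_idxOf_otherDarts h.ρ_cube hρ] at hnext
  exact (budget_pos (hE.close_halfEdge hσ) hnext hstart.budget
    (partialSize_insert (Finset.notMem_empty d) hσ).ge).2

theorem exists_mem_catalogue (h : IsK3Map σ ρ) (hd : ∀ x, code σ ρ d ≤ code σ ρ x) :
    ∃ t e, (t, code σ ρ d) ∈ catalogue ∧ IsTableOf σ ρ d t e := by
  have := Fintype.ofFinite D
  have hcard : Fintype.card D ≤ 24 := Nat.card_eq_fintype_card (α := D) ▸ h.card_le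
  have hD : Fintype.card D ≤ 32 := hcard.trans (by decide)
  have hconn := h.connected d
  simp only [catalogue, Multiset.mem_add]
  by_cases hρ : ρ d = d
  · obtain ⟨t, e, ht, he⟩ := (Reaches.start_one h hρ).exists_mem_leaves (A := [0, 1, 2]) (f := 25)
      (u := [0]) h.σ_sq h.ρ_cube hconn h.planar hD (fun _ => by decide) (fun _ => by decide)
      (by decide) (by rw [Finset.card_empty]; omega)
    exact ⟨t, e, Or.inl (Or.inl (code_of_apply_eq hρ ▸ ht)), he⟩
  have hρ_ne (x : D) : ρ x ≠ x := fun hx => hρ (root_apply_eq (hd x) hx)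
  by_cases hσ : σ d = d
  · obtain ⟨t, e, ht, he⟩ := (Reaches.start_halfEdge h hρ hσ).exists_mem_leaves (A := [0, 2])
      (f := 24) (u := [0, 1]) h.σ_sq h.ρ_cube hconn h.planar hD (fun _ => by decide)
      (fun ⟨x, hx⟩ => (hρ_ne x hx).elim) (by decide) (by rw [Finset.card_singleton]; omega)
    exact ⟨t, e, Or.inl (Or.inr (code_of_apply_ne_of_apply_eq hρ hσ ▸ ht)), he⟩
  · obtain ⟨t, e, ht, he⟩ := (Reaches.start_three h hρ).exists_mem_leaves (A := [2]) (f := 25)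
      (u := [1]) h.σ_sq h.ρ_cube hconn h.planar hD
      (fun ⟨x, hx⟩ => (hσ (root_apply_eq_of_ne (hd x) (hρ_ne x) hx hρ)).elim)
      (fun ⟨x, hx⟩ => (hρ_ne x hx).elim) (by decide) (by rw [Finset.card_empty]; omega)
    exact ⟨t, e, Or.inr (code_of_apply_ne hρ ▸ ht), he⟩

end Start

section Words

open Equiv Equiv.Perm

variable {D D' : Type*} {σ ρ : Perm D} {d : D} {σ' ρ' : Perm D'} {d' : D'} {t : Table} {e : D → ℕ}
  {e' : D' → ℕ}

namespace IsTableOf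

/-- The numbering of the darts as a bijection. -/
noncomputable def equiv (h : IsTableOf σ ρ d t e) : D ≃ Fin t.size :=
  Equiv.ofBijective (fun x => ⟨e x, h.lt_size x⟩) <|
    (Nat.bijective_iff_injective_and_card _).2
      ⟨fun _ _ hxy => h.injective (Fin.val_eq_of_eq hxy), by rw [Nat.card_fin, h.size]⟩

theorem exists_equiv (h : IsTableOf σ ρ d t e) (h' : IsTableOf σ' ρ' d' t e') :
    ∃ φ : D ≃ D', φ d = d' ∧ (∀ x, σ' (φ x) = φ (σ x)) ∧ ∀ x, ρ' (φ x) = φ (ρ x) := by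
  let φ : D ≃ D' := h.equiv.trans h'.equiv.symm
  have hφ (x : D) : e' (φ x) = e x := Fin.val_eq_of_eq (h'.equiv.apply_symm_apply (h.equiv x))
  refine ⟨φ, h'.injective ?_, fun x => h'.injective ?_, fun x => h'.injective ?_⟩
  · rw [hφ, h.root, h'.root]
  · rw [← h'.digit_σ, hφ, hφ, h.digit_σ]
  · rw [← h'.digit_ρ, hφ, hφ, h.digit_ρ]

theorem code_eq [DecidableEq D] (h : IsTableOf σ ρ d t e) (x : D) : t.code (e x) = code σ ρ x :=
  @code_map D _ _ ℕ natBEq _ e σ ρ (digit t.σ) (digit t.ρ) h.injective h.digit_σ h.digit_ρ x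

end IsTableOf

variable [Finite D] [DecidableEq D]

theorem code_mem_canonicalWords (h : IsK3Map σ ρ) (hd : ∀ x, code σ ρ d ≤ code σ ρ x) :
    code σ ρ d ∈ canonicalWords := by
  obtain ⟨t, e, ht, he⟩ := exists_mem_catalogue h hd
  refine mem_canonicalWords.2 ⟨t, ht, canonical_iff.2 fun j hj _ => ?_⟩
  obtain ⟨x, hx⟩ := he.equiv.surjective ⟨j, hj⟩
  obtain rfl : e x = j := Fin.val_eq_of_eq hx
  rw [he.code_eq]
  exact hd x

theorem exists_equiv_of_code_eq [Finite D'] [DecidableEq D'] (h : IsK3Map σ ρ)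
    (h' : IsK3Map σ' ρ') (hd : ∀ x, code σ ρ d ≤ code σ ρ x)
    (hd' : ∀ x, code σ' ρ' d' ≤ code σ' ρ' x) (hcode : code σ ρ d = code σ' ρ' d') :
    ∃ φ : D ≃ D', φ d = d' ∧ (∀ x, σ' (φ x) = φ (σ x)) ∧ ∀ x, ρ' (φ x) = φ (ρ x) := by
  obtain ⟨t, e, ht, he⟩ := exists_mem_catalogue h hd
  obtain ⟨t', e', ht', he'⟩ := exists_mem_catalogue h' hd'
  obtain rfl := table_injective ht (hcode ▸ ht')
  exact he.exists_equiv he'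

end Words

/-! ### The modular group as a free product -/

section ModularGroup

open Monoid

theorem mem_pmOne {m : SL2Z} : m ∈ pmOne ↔ m = 1 ∨ m = -1 := by
  constructor
  · rintro ⟨k, rfl⟩
    rcases Int.even_or_odd k with hk | hk
    · exact .inl hk.neg_one_zpow
    · exact .inr hk.neg_one_zpow
  · rintro (rfl | rfl)
    · exact one_mem _
    · exact Subgroup.mem_zpowers _

theorem Sp_mul_self : Sp * Sp = 1 :=
  (QuotientGroup.eq_one_iff _).2 <| mem_pmOne.2 <| .inr <| by decide

theorem ST_cube : Sp * Tp * (Sp * Tp) * (Sp * Tp) = 1 :=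
  (QuotientGroup.eq_one_iff _).2 <| mem_pmOne.2 <| .inr <| by decide

theorem Sp_mul_ST : Sp * (Sp * Tp) = Tp := by
  rw [← mul_assoc, Sp_mul_self, one_mul]

theorem closure_Sp_ST : Subgroup.closure {Sp, Sp * Tp} = ⊤ := by
  have hxi : Subgroup.closure {Sp, Tp} = (⊤ : Subgroup PSL2Z) := by
    have h := congrArg (Subgroup.map xi) SpecialLinearGroup.SL2Z_generators
    rwa [MonoidHom.map_closure, Set.image_pair, ← MonoidHom.range_eq_map,
      MonoidHom.range_eq_top.2
        (show Function.Surjective xi from QuotientGroup.mk'_surjective pmOne)] at h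
  have hS : Sp ∈ Subgroup.closure {Sp, Sp * Tp} := Subgroup.subset_closure (.inl rfl)
  rw [eq_top_iff, ← hxi, Subgroup.closure_le]
  rintro x (rfl | rfl)
  · exact hS
  · exact (congrArg (· ∈ Subgroup.closure {Sp, Sp * Tp}) Sp_mul_ST).mp
      (mul_mem hS (Subgroup.subset_closure (.inr rfl)))

/-- The product of the entries of the first column. Its sign controls the ping-pong: `S` exchanges
the two signs, while `ST` and its square turn positive products into negative ones. -/
def columnProduct (g : PSL2Z) : ℤ :=
  Quotient.liftOn' g (fun m => m 0 0 * m 1 0) fun m m' h => by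
    rcases mem_pmOne.1 (QuotientGroup.leftRel_apply.1 h) with h | h
    · rw [inv_mul_eq_one.1 h]
    · rw [inv_mul_eq_iff_eq_mul.1 h, mul_neg_one]
      simp

theorem columnProduct_Sp_mul (g : PSL2Z) : columnProduct (Sp * g) = -columnProduct g := by
  obtain ⟨m, rfl⟩ := QuotientGroup.mk'_surjective pmOne g
  change (ModularGroup.S * m) 0 0 * (ModularGroup.S * m) 1 0 = -(m 0 0 * m 1 0)
  simp [Matrix.mul_apply, mul_comm]

theorem columnProduct_ST_mul_neg {g : PSL2Z} (hg : 0 < columnProduct g) :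
    columnProduct (Sp * Tp * g) < 0 := by
  obtain ⟨m, rfl⟩ := QuotientGroup.mk'_surjective pmOne g
  change 0 < m 0 0 * m 1 0 at hg
  calc (ModularGroup.S * ModularGroup.T * m) 0 0 * (ModularGroup.S * ModularGroup.T * m) 1 0
    _ = -(m 0 0 * m 1 0 + m 1 0 ^ 2) := by
      simp [Matrix.mul_apply, Fin.sum_univ_two]
      ring
    _ < 0 := neg_neg_of_pos (add_pos_of_pos_of_nonneg hg (sq_nonneg _))

theorem columnProduct_ST_mul_ST_mul_neg {g : PSL2Z} (hg : 0 < columnProduct g) :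
    columnProduct (Sp * Tp * (Sp * Tp) * g) < 0 := by
  obtain ⟨m, rfl⟩ := QuotientGroup.mk'_surjective pmOne g
  change 0 < m 0 0 * m 1 0 at hg
  calc (ModularGroup.S * ModularGroup.T * (ModularGroup.S * ModularGroup.T) * m) 0 0 *
      (ModularGroup.S * ModularGroup.T * (ModularGroup.S * ModularGroup.T) * m) 1 0
    _ = -(m 0 0 * m 1 0 + m 0 0 ^ 2) := by
      simp [Matrix.mul_apply, Fin.sum_univ_two]
      ring
    _ < 0 := neg_neg_of_pos (add_pos_of_pos_of_nonneg hg (sq_nonneg _))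

section FreeProduct

variable {G : Type*} [Group G]

/-- The homomorphism from the cyclic group of order `n` sending the generator `1` to `c`. -/
def cyclicHom (n : ℕ) (c : G) (hc : c ^ n = 1) : Multiplicative (ZMod n) →* G :=
  AddMonoidHom.toMultiplicativeLeft <| ZMod.lift n ⟨zmultiplesHom (Additive G) (.ofMul c), by
    rw [zmultiplesHom_apply, natCast_zsmul, ← ofMul_pow, hc, ofMul_one]⟩

theorem cyclicHom_ofAdd_cast {n : ℕ} {c : G} (hc : c ^ n = 1) (k : ℤ) :
    cyclicHom n c hc (.ofAdd (k : ZMod n)) = c ^ k :=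
  congrArg Additive.toMul (ZMod.lift_coe n _ k)

variable {ι : Type*} {n : ι → ℕ} {c : ι → G}

/-- The homomorphism from the free product of cyclic groups of orders `n i` sending the generators
to `c i`. -/
def freeProductHom (hc : ∀ i, c i ^ n i = 1) :
    CoprodI (fun i => Multiplicative (ZMod (n i))) →* G :=
  CoprodI.lift fun i => cyclicHom (n i) (c i) (hc i)

theorem freeProductHom_of_one (hc : ∀ i, c i ^ n i = 1) (i : ι) :
    freeProductHom hc (CoprodI.of (i := i) (.ofAdd ((1 : ℤ) : ZMod (n i)))) = c i := by
  rw [freeProductHom, CoprodI.lift_of, cyclicHom_ofAdd_cast, _root_.zpow_one]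

end FreeProduct

/-- The orders of the generators `S` and `ST`. -/
abbrev generatorOrder (i : Bool) : ℕ :=
  bif i then 3 else 2

/-- The generators `S` and `ST`. -/
abbrev generator (i : Bool) : PSL2Z :=
  bif i then Sp * Tp else Sp

theorem generator_pow : ∀ i, generator i ^ generatorOrder i = 1
  | false => (pow_two Sp).trans Sp_mul_self
  | true => (pow_three' (Sp * Tp)).trans ST_cube

theorem freeProductHom_generator_injective : Function.Injective (freeProductHom generator_pow) := by
  let X (i : Bool) : Set PSL2Z := {g | bif i then columnProduct g < 0 else 0 < columnProduct g}
  have hX : Disjoint (X false) (X true) :=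
    Set.disjoint_left.2 fun g (h : 0 < columnProduct g) => h.not_gt
  refine CoprodI.lift_injective_of_ping_pong _ (.inr ⟨true, ?_⟩) X ?_ ?_ ?_
  · change 3 ≤ Cardinal.mk (ZMod 3)
    rw [Cardinal.mk_fintype, ZMod.card, Nat.cast_ofNat]
  · rintro (_ | _)
    · exact ⟨xi ⟨!![1, 0; 1, 1], by simp⟩, show (0 : ℤ) < 1 * 1 by norm_num⟩
    · refine ⟨xi ⟨!![1, 0; -1, 1], by simp⟩, ?_⟩
      change (1 : ℤ) * -1 < 0
      norm_num
  · rintro (_ | _) (_ | _) hij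
    · exact absurd rfl hij
    · exact hX
    · exact hX.symm
    · exact absurd rfl hij
  · rintro (_ | _) (_ | _) hij h hh
    · exact absurd rfl hij
    · have hcases : ∀ h : Multiplicative (ZMod 2), h ≠ 1 → h = .ofAdd ((1 : ℤ) : ZMod 2) := by
        decide
      rintro _ ⟨g, hg, rfl⟩
      change 0 < columnProduct (cyclicHom _ _ _ _ * g)
      rw [hcases h hh, cyclicHom_ofAdd_cast, _root_.zpow_one]
      exact (columnProduct_Sp_mul g).symm ▸ neg_pos.2 hg
    · have hcases : ∀ h : Multiplicative (ZMod 3), h ≠ 1 →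
          h = .ofAdd ((1 : ℤ) : ZMod 3) ∨ h = .ofAdd ((2 : ℤ) : ZMod 3) := by
        decide
      rintro _ ⟨g, hg, rfl⟩
      change columnProduct (cyclicHom _ _ _ _ * g) < 0
      obtain rfl | rfl := hcases h hh
      · rw [cyclicHom_ofAdd_cast, _root_.zpow_one]
        exact columnProduct_ST_mul_neg hg
      · rw [cyclicHom_ofAdd_cast, _root_.zpow_two]
        exact columnProduct_ST_mul_ST_mul_neg hg
    · exact absurd rfl hij

theorem freeProductHom_generator_surjective :
    Function.Surjective (freeProductHom generator_pow) := by
  rw [← MonoidHom.range_eq_top, eq_top_iff, ← closure_Sp_ST, Subgroup.closure_le]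
  rintro x (rfl | rfl)
  · exact ⟨_, freeProductHom_of_one generator_pow false⟩
  · exact ⟨_, freeProductHom_of_one generator_pow true⟩

theorem exists_monoidHom_of_relations {G : Type*} [Group G] {a b : G} (ha : a * a = 1)
    (hb : b * b * b = 1) :
    ∃ φ : PSL2Z →* G, φ Sp = a ∧ φ (Sp * Tp) = b := by
  let e := MulEquiv.ofBijective (freeProductHom generator_pow)
    ⟨freeProductHom_generator_injective, freeProductHom_generator_surjective⟩
  have hc (i : Bool) : (bif i then b else a) ^ generatorOrder i = 1 := by
    cases i
    · exact (pow_two a).trans ha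
    · exact (pow_three' b).trans hb
  have he (i : Bool) : freeProductHom hc (e.symm (generator i)) = bif i then b else a := by
    have hi : e.symm (generator i) = CoprodI.of (i := i) (.ofAdd ((1 : ℤ) : ZMod _)) :=
      e.symm_apply_eq.2 (freeProductHom_of_one generator_pow i).symm
    rw [hi, freeProductHom_of_one]
  exact ⟨(freeProductHom hc).comp e.symm.toMonoidHom, he false, he true⟩

end ModularGroup

/-! ### Conjugacy classes of subgroups -/

section CosetSpaces

variable {G X Y : Type*} [Group G] [MulAction G X] [MulAction G Y] {s : Set G}

theorem rel_smul_of_closure_eq_top (hs : Subgroup.closure s = ⊤) {t : Setoid X}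
    (h : ∀ g ∈ s, ∀ x, t x (g • x)) (g : G) (x : X) : t x (g • x) := by
  have hg : g ∈ Subgroup.closure s := hs ▸ Subgroup.mem_top g
  induction hg using Subgroup.closure_induction generalizing x with
  | mem g hg => exact h g hg x
  | one => rw [one_smul]
  | mul a b _ _ ha hb => exact mul_smul a b x ▸ t.trans' (hb x) (ha (b • x))
  | inv a _ ha => simpa only [smul_inv_smul] using t.symm' (ha (a⁻¹ • x))

theorem map_smul_of_closure_eq_top (hs : Subgroup.closure s = ⊤) {f : X → Y}
    (h : ∀ g ∈ s, ∀ x, f (g • x) = g • f x) (g : G) (x : X) : f (g • x) = g • f x := by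
  have hg : g ∈ Subgroup.closure s := hs ▸ Subgroup.mem_top g
  induction hg using Subgroup.closure_induction generalizing x with
  | mem g hg => exact h g hg x
  | one => rw [one_smul, one_smul]
  | mul a b _ _ ha hb => rw [mul_smul, ha, hb, mul_smul]
  | inv a _ ha => rw [eq_inv_smul_iff, ← ha, smul_inv_smul]

theorem exists_equivariant_equiv_quotient_stabilizer [MulAction.IsPretransitive G X] (x : X) :
    ∃ e : G ⧸ MulAction.stabilizer G x ≃ X, ∀ (g : G) y, e (g • y) = g • e y :=
  ⟨.ofBijective (MulAction.ofQuotientStabilizer G x)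
    ⟨MulAction.injective_ofQuotientStabilizer G x, fun y =>
      let ⟨g, hg⟩ := MulAction.exists_smul_eq G x y
      ⟨g, hg⟩⟩,
    MulAction.ofQuotientStabilizer_smul G x⟩

theorem subgroupConj_iff_exists_equiv {A B : Subgroup G} :
    SubgroupConj A B ↔ ∃ e : G ⧸ B ≃ G ⧸ A, ∀ (g : G) x, e (g • x) = g • e x := by
  constructor
  · rintro ⟨g, hg⟩
    have hB : MulAction.stabilizer G (g • ((1 : G) : G ⧸ A)) = B := by
      rw [MulAction.stabilizer_smul_eq_stabilizer_map_conj, MulAction.stabilizer_quotient]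
      exact hg
    exact hB ▸ exists_equivariant_equiv_quotient_stabilizer _
  · rintro ⟨e, he⟩
    obtain ⟨g, hg⟩ := MulAction.exists_smul_eq G ((1 : G) : G ⧸ A) (e (1 : G))
    refine ⟨g, ?_⟩
    calc Subgroup.map (MulAut.conj g).toMonoidHom A
      _ = MulAction.stabilizer G (e (1 : G)) := by
        rw [← hg, MulAction.stabilizer_smul_eq_stabilizer_map_conj, MulAction.stabilizer_quotient]
      _ = MulAction.stabilizer G ((1 : G) : G ⧸ B) := by
        ext h
        rw [MulAction.mem_stabilizer_iff, MulAction.mem_stabilizer_iff, ← he,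
          e.apply_eq_iff_eq]
      _ = B := MulAction.stabilizer_quotient B

end CosetSpaces

section CosetMap

open Equiv Equiv.Perm

/-- The permutation of the cosets of `Γ` induced by `S`. -/
noncomputable def cosetS (Γ : Subgroup PSL2Z) : Perm (PSL2Z ⧸ Γ) :=
  MulAction.toPerm Sp

/-- The permutation of the cosets of `Γ` induced by `ST`. -/
noncomputable def cosetST (Γ : Subgroup PSL2Z) : Perm (PSL2Z ⧸ Γ) :=
  MulAction.toPerm (Sp * Tp)

theorem nOrb_eq_numClasses (g : PSL2Z) (Γ : Subgroup PSL2Z) :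
    nOrb g Γ = numClasses (SameCycle.setoid (MulAction.toPerm g : Perm (PSL2Z ⧸ Γ))) := by
  refine numClasses_congr (.refl _) fun x y => ?_
  have hpow (k : ℤ) : (MulAction.toPerm g : Perm (PSL2Z ⧸ Γ)) ^ k = MulAction.toPerm (g ^ k) :=
    (map_zpow (MulAction.toPermHom PSL2Z (PSL2Z ⧸ Γ)) g k).symm
  refine Iff.trans ?_ sameCycle_comm
  simp only [SameCycle, hpow]
  exact ⟨fun ⟨⟨_, k, rfl⟩, h⟩ => ⟨k, h⟩, fun ⟨k, h⟩ => ⟨⟨g ^ k, k, rfl⟩, h⟩⟩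

variable {Γ A B : Subgroup PSL2Z} {w : List ℕ}

theorem mapSize_coset : mapSize (cosetS Γ) (cosetST Γ) = tfIdx Γ := by
  rw [tfIdx, Subgroup.index_eq_card]
  rfl

theorem isK3Map_coset_iff : IsK3Map (cosetS Γ) (cosetST Γ) ↔ GenusZero Γ ∧ tfIdx Γ ≤ 24 := by
  have hmul : cosetS Γ * cosetST Γ = MulAction.toPerm Tp := by
    ext x
    exact (smul_smul _ _ x).trans (congrArg (· • x) Sp_mul_ST)
  have hgenus : GenusZero Γ ↔ numClasses (SameCycle.setoid (cosetS Γ)) +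
      numClasses (SameCycle.setoid (cosetST Γ)) +
      numClasses (SameCycle.setoid (cosetS Γ * cosetST Γ)) = Nat.card (PSL2Z ⧸ Γ) + 2 := by
    rw [GenusZero, nOrb_eq_numClasses, nOrb_eq_numClasses, nOrb_eq_numClasses, hmul,
      Subgroup.index_eq_card]
    rfl
  refine ⟨fun h => ⟨hgenus.2 h.genus, mapSize_coset ▸ h.size_le⟩, fun ⟨hΓ, hsize⟩ => ?_⟩
  refine ⟨fun x => ?_, fun x => ?_, fun x y => ?_, hgenus.1 hΓ, mapSize_coset.trans_le hsize⟩
  · exact (smul_smul _ _ x).trans (by rw [Sp_mul_self, one_smul])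
  · change (Sp * Tp) • (Sp * Tp) • (Sp * Tp) • x = x
    rw [smul_smul, smul_smul, ST_cube, one_smul]
  · obtain ⟨g, rfl⟩ := MulAction.exists_smul_eq PSL2Z x y
    refine rel_smul_of_closure_eq_top closure_Sp_ST ?_ g x
    rintro _ (rfl | rfl)
    · exact orbitSetoid_right _ _
    · exact orbitSetoid_left _ _

open Classical in
/-- The codes of the map formed by the cosets of `Γ`, rooted in all possible ways. -/
def codes (Γ : Subgroup PSL2Z) : Set (List ℕ) :=
  Set.range (code (cosetS Γ) (cosetST Γ))

theorem exists_isLeast_codes [Γ.FiniteIndex] : ∃ w, IsLeast (codes Γ) w := by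
  classical
  obtain ⟨d, hd⟩ := Finite.exists_min (code (cosetS Γ) (cosetST Γ))
  exact ⟨_, ⟨d, rfl⟩, Set.forall_mem_range.2 hd⟩

theorem codes_eq_of_subgroupConj (h : SubgroupConj A B) : codes A = codes B := by
  classical
  obtain ⟨e, he⟩ := subgroupConj_iff_exists_equiv.1 h
  have hcode : code (cosetS A) (cosetST A) ∘ e = code (cosetS B) (cosetST B) :=
    funext <| code_map e.injective (fun x => (he Sp x).symm) fun x => (he (Sp * Tp) x).symm
  unfold codes
  rw [← hcode, e.surjective.range_comp]

theorem exists_equiv_cosets {D : Type*} [Nonempty D] {σ ρ : Perm D} (hσ : ∀ x, σ (σ x) = x)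
    (hρ : ∀ x, ρ (ρ (ρ x)) = x) (hconn : ∀ x y, orbitSetoid ρ σ x y) :
    ∃ (Γ : Subgroup PSL2Z) (e : D ≃ PSL2Z ⧸ Γ),
      (∀ x, cosetS Γ (e x) = e (σ x)) ∧ ∀ x, cosetST Γ (e x) = e (ρ x) := by
  obtain ⟨φ, hφS, hφST⟩ := exists_monoidHom_of_relations (a := σ) (b := ρ) (Equiv.ext hσ)
    (Equiv.ext hρ)
  let _ : MulAction PSL2Z D := .compHom D φ
  have hS (x : D) : Sp • x = σ x := congrArg (· x) hφS
  have hST (x : D) : (Sp * Tp) • x = ρ x := congrArg (· x) hφST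
  have hle : orbitSetoid ρ σ ≤ MulAction.orbitRel PSL2Z D :=
    orbitSetoid_le (fun x => Setoid.symm' _ ⟨Sp * Tp, hST x⟩) fun x => Setoid.symm' _ ⟨Sp, hS x⟩
  have : MulAction.IsPretransitive PSL2Z D := ⟨fun x y => hle (hconn y x)⟩
  obtain ⟨e, he⟩ :=
    exists_equivariant_equiv_quotient_stabilizer (G := PSL2Z) (Classical.arbitrary D)
  refine ⟨_, e.symm, fun x => ?_, fun x => ?_⟩
  · rw [← hS]
    exact e.eq_symm_apply.2 ((he Sp _).trans (by rw [e.apply_symm_apply]))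
  · rw [← hST]
    exact e.eq_symm_apply.2 ((he (Sp * Tp) _).trans (by rw [e.apply_symm_apply]))

/-- The subgroups to be counted: those of genus zero and finite index whose associated torsion
free subgroup has index at most 24. -/
def IsK3Subgroup (Γ : Subgroup PSL2Z) : Prop :=
  Γ.index ≠ 0 ∧ GenusZero Γ ∧ tfIdx Γ ≤ 24

namespace IsK3Subgroup

theorem finiteIndex (h : IsK3Subgroup Γ) : Γ.FiniteIndex :=
  ⟨h.1⟩

theorem isK3Map (h : IsK3Subgroup Γ) : IsK3Map (cosetS Γ) (cosetST Γ) :=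
  isK3Map_coset_iff.2 h.2

theorem mem_canonicalWords (h : IsK3Subgroup Γ) (hw : IsLeast (codes Γ) w) :
    w ∈ canonicalWords := by
  classical
  have := h.finiteIndex
  obtain ⟨⟨d, rfl⟩, hd⟩ := hw
  exact code_mem_canonicalWords h.isK3Map fun x => hd ⟨x, rfl⟩

theorem subgroupConj (hA : IsK3Subgroup A) (hB : IsK3Subgroup B) (hwA : IsLeast (codes A) w)
    (hwB : IsLeast (codes B) w) : SubgroupConj A B := by
  classical
  have := hA.finiteIndex
  have := hB.finiteIndex
  obtain ⟨⟨d, rfl⟩, hd⟩ := hwA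
  obtain ⟨⟨d', hcode⟩, hd'⟩ := hwB
  obtain ⟨φ, -, hS, hST⟩ := exists_equiv_of_code_eq hB.isK3Map hA.isK3Map
    (fun x => hcode ▸ hd' ⟨x, rfl⟩) (fun x => hd ⟨x, rfl⟩) hcode
  refine subgroupConj_iff_exists_equiv.2 ⟨φ, map_smul_of_closure_eq_top closure_Sp_ST ?_⟩
  rintro _ (rfl | rfl)
  · exact fun x => (hS x).symm
  · exact fun x => (hST x).symm

end IsK3Subgroup

theorem exists_isK3Subgroup (hw : w ∈ canonicalWords) :
    ∃ Γ : Subgroup PSL2Z, IsK3Subgroup Γ ∧ IsLeast (codes Γ) w := by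
  classical
  obtain ⟨n, σ, ρ, d, h, rfl, hd⟩ := exists_isK3Map_of_mem_canonicalWords hw
  have := h.nonempty
  obtain ⟨Γ, e, hS, hST⟩ := exists_equiv_cosets h.σ_sq h.ρ_cube h.connected
  have := Finite.of_equiv _ e
  have hcode (x : Fin n) : code (cosetS Γ) (cosetST Γ) (e x) = code σ ρ x :=
    code_map e.injective hS hST x
  refine ⟨Γ, ⟨?_, isK3Map_coset_iff.1 (h.congr e hS hST)⟩, ⟨e d, ?_⟩, ?_⟩
  · rw [Subgroup.index_eq_card]
    exact Nat.card_pos.ne'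
  · convert hcode d
  · rintro _ ⟨y, rfl⟩
    obtain ⟨x, rfl⟩ := e.surjective y
    convert hd x
    exact hcode x

theorem card_quot_eq_card {α β : Type*} {r : α → α → Prop} {s : Finset β} {f : α → β}
    (hr : ∀ a b, r a b ↔ f a = f b) (hmem : ∀ a, f a ∈ s) (hsurj : ∀ b ∈ s, ∃ a, f a = b) :
    Nat.card (Quot r) = s.card := by
  let F : Quot r → s :=
    Quot.lift (fun a => ⟨f a, hmem a⟩) fun a b h => Subtype.ext ((hr a b).1 h)
  have hF : Function.Bijective F := by
    refine ⟨?_, fun b => ?_⟩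
    · rintro ⟨a⟩ ⟨b⟩ hab
      exact Quot.sound ((hr a b).2 (Subtype.ext_iff.1 hab))
    · obtain ⟨a, ha⟩ := hsurj b b.2
      exact ⟨Quot.mk r a, Subtype.ext ha⟩
  rw [Nat.card_eq_of_bijective F hF, Nat.card_eq_fintype_card, Fintype.card_coe]

theorem countClasses_isK3Subgroup : countClasses IsK3Subgroup = canonicalWords.card := by
  choose least hleast using fun Γ : Subtype IsK3Subgroup =>
    have := Γ.2.finiteIndex
    exists_isLeast_codes (Γ := Γ.1)
  refine card_quot_eq_card (f := least) (fun A B => ⟨fun h => ?_, fun h => ?_⟩)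
    (fun Γ => Γ.2.mem_canonicalWords (hleast Γ)) fun w hw => ?_
  · exact (hleast A).unique (codes_eq_of_subgroupConj h ▸ hleast B)
  · exact A.2.subgroupConj B.2 (hleast A) (h ▸ hleast B)
  · obtain ⟨Γ, hΓ, hw⟩ := exists_isK3Subgroup hw
    exact ⟨⟨Γ, hΓ⟩, (hleast ⟨Γ, hΓ⟩).unique hw⟩

end CosetMap

end ModularMonodromy

/-- There are exactly 3228 conjugacy classes of genus-zero finite-index subgroups `Γ` of
`PSL(2,ℤ)` with `n + 3e₂ + 2e₃ ≤ 24` (these are exactly the modular monodromy groups of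
elliptically fibered K3 surfaces); moreover for any such subgroup the quantity
`n + 3e₂ + 2e₃` lies in `{6, 12, 18, 24}`. -/
theorem count_K3_modular_monodromy :
    countClasses (fun Γ => Γ.index ≠ 0 ∧ GenusZero Γ ∧ tfIdx Γ ≤ 24) = 3228 ∧
    ∀ Γ : Subgroup PSL2Z, Γ.index ≠ 0 → GenusZero Γ → tfIdx Γ ≤ 24 →
      tfIdx Γ ∈ ({6, 12, 18, 24} : Set ℕ) := by
  refine ⟨ModularMonodromy.countClasses_isK3Subgroup.trans ModularMonodromy.card_canonicalWords,
    fun Γ hindex hgenus hsize => ?_⟩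
  have hΓ : ModularMonodromy.IsK3Subgroup Γ := ⟨hindex, hgenus, hsize⟩
  have := hΓ.finiteIndex
  exact ModularMonodromy.mapSize_coset ▸ hΓ.isK3Map.mapSize_mem
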